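/- arXiv:2205.05947 — 2 statements merged into one kernel-verified Lean document; each statement's English description precedes it below -/
import Mathlib

section
/- For every γ with 0 < γ < 1/2 there exists M ∈ ℕ such that every finite graph G contains a spanning subgraph G' with interval thickness θ(G') ≤ M and with e(G) - e(G') ≤ γ·|V(G)|². -/
/-- `c` is an interval edge-coloring of `G`: a proper edge-coloring (adjacent edges get
distinct colors) such that at every vertex the set of incident colors is a set of
consecutive integers. -/
def IsIntervalColoring {V : Type*} (G : SimpleGraph V) (c : Sym2 V → ℤ) : Prop :=
  (∀ e ∈ G.edgeSet, ∀ f ∈ G.edgeSet, e ≠ f → (∃ v, v ∈ e ∧ v ∈ f) → c e ≠ c f) ∧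
  (∀ v : V, ∀ x y z : ℤ, x ≤ y → y ≤ z →
    (∃ e ∈ G.edgeSet, v ∈ e ∧ c e = x) → (∃ e ∈ G.edgeSet, v ∈ e ∧ c e = z) →
    ∃ e ∈ G.edgeSet, v ∈ e ∧ c e = y)

/-- `G` admits an interval edge-coloring. -/
def IntervalColorable {V : Type*} (G : SimpleGraph V) : Prop :=
  ∃ c : Sym2 V → ℤ, IsIntervalColoring G c

/-- The interval thickness of `G` is at most `k`: the edge set of `G` can be partitioned
into `k` classes, each of which spans an interval colorable graph. -/
def IntervalThicknessLE {V : Type*} (G : SimpleGraph V) (k : ℕ) : Prop :=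
  ∃ f : Sym2 V → Fin k,
    ∀ i : Fin k,
      IntervalColorable (SimpleGraph.fromEdgeSet {e | e ∈ G.edgeSet ∧ f e = i})

/-- The density of the pair `(X, Y)` in `G`, as a real number. -/
noncomputable def dens {V : Type*} (G : SimpleGraph V) [DecidableRel G.Adj]
    (X Y : Finset V) : ℝ :=
  (G.edgeDensity X Y : ℝ)

/-- `(X, Y)` is an `ε`-regular pair in `G`:
`|d(X,Y) - d(A,B)| ≤ ε` for all `A ⊆ X`, `B ⊆ Y` with `|A| ≥ ε|X|`, `|B| ≥ ε|Y|`. -/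
def EpsRegular {V : Type*} (G : SimpleGraph V) [DecidableRel G.Adj]
    (ε : ℝ) (X Y : Finset V) : Prop :=
  ∀ A ⊆ X, ∀ B ⊆ Y, ε * X.card ≤ A.card → ε * Y.card ≤ B.card →
    |dens G X Y - dens G A B| ≤ ε

/-!
Say that a pair `(A, B)` with edge density `d` is maximal if no pair of subsets has a larger value
of `d ^ 4 * min |A| |B|`; a pair with the largest value can be balanced by averaging. For a
maximal pair with `|A| = |B| = m`, weighted AM-GM turns maximality into upper bounds on the edge
counts of subpairs that are linear in the sizes, and subtracting these from `d * m ^ 2` gives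
`e(X, Y) ≥ (d * m / 8) * min |X| |Y|` whenever `|X| + |Y| > m`. By Hall's theorem such a pair
contains `d * m / 8` disjoint perfect matchings. Their union is a regular bipartite graph, interval
colored by the index of the matching. So every graph with more than `γ * n ^ 2` edges contains an
interval colorable subgraph with at least `c(γ) * n ^ 2` edges, and peeling such subgraphs off
greedily stops after boundedly many rounds. Using maximal pairs instead of the regularity lemma
makes the number of rounds polynomial in `1 / γ`.
-/

open Finset

/-! ### Density-maximal pairs -/

section Relation

variable {α β γ δ : Type*}

lemma exists_subset_card_eq_mul_sum_le {ι K : Type*} [CommRing K] [LinearOrder K]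
    [IsStrictOrderedRing K] (g : ι → K) {s : ℕ} {T : Finset ι} (hs : s ≤ #T) :
    ∃ T' ⊆ T, #T' = s ∧ s * ∑ i ∈ T, g i ≤ #T * ∑ i ∈ T', g i := by
  classical
  induction T using Finset.strongInduction with
  | H T ih =>
    obtain rfl | hlt := hs.eq_or_lt
    · exact ⟨T, subset_rfl, rfl, le_rfl⟩
    obtain ⟨i, hi, hmin⟩ := T.exists_min_image g (card_pos.1 (by lia))
    have hcard : #(T.erase i) + 1 = #T := card_erase_add_one hi
    obtain ⟨T', hT', rfl, h⟩ := ih _ (erase_ssubset hi) (by lia)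
    refine ⟨T', hT'.trans (erase_subset _ _), rfl, ?_⟩
    obtain rfl | hne := T'.eq_empty_or_nonempty
    · simp
    have hpos : (0 : K) < #(T.erase i) := by
      exact_mod_cast (card_pos.2 hne).trans_le (card_le_card hT')
    have hmin' : #(T.erase i) * g i ≤ ∑ x ∈ T.erase i, g x := by
      rw [← nsmul_eq_mul]
      exact card_nsmul_le_sum _ _ _ fun x hx ↦ hmin x (mem_of_mem_erase hx)
    rw [← add_sum_erase T g hi, ← hcard]
    push_cast
    refine le_of_mul_le_mul_left ?_ hpos
    linear_combination (#T' : K) * hmin' + (#(T.erase i) + 1 : K) * h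

lemma card_interedges_flip (r : α → β → Prop) [∀ a, DecidablePred (r a)] (A : Finset α)
    (B : Finset β) : #(Rel.interedges (fun b a ↦ r a b) B A) = #(Rel.interedges r A B) :=
  card_equiv (Equiv.prodComm _ _) (by simp [Rel.mem_interedges_iff, and_left_comm])

lemma card_interedges_map (r : γ → δ → Prop) [∀ c, DecidablePred (r c)] (f : α ↪ γ) (g : β ↪ δ)
    (A : Finset α) (B : Finset β) :
    #(Rel.interedges (fun a b ↦ r (f a) (g b)) A B) = #(Rel.interedges r (A.map f) (B.map g)) := by
  rw [← card_map (f.prodMap g)]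
  congr 1
  ext ⟨c, d⟩
  simp only [mem_map, Rel.mem_interedges_iff, Prod.exists, Function.Embedding.coe_prodMap,
    Prod.map_apply, Prod.mk.injEq]
  grind

variable (r : α → β → Prop) [∀ a, DecidablePred (r a)]

lemma card_interedges_sdiff_add [DecidableEq α] {X A : Finset α} (h : X ⊆ A) (B : Finset β) :
    #(Rel.interedges r (A \ X) B) + #(Rel.interedges r X B) = #(Rel.interedges r A B) := by
  classical
  rw [← card_union_of_disjoint (Rel.interedges_disjoint_left r sdiff_disjoint B)]
  congr 1
  ext x
  have := @h x.1
  simp only [mem_union, Rel.mem_interedges_iff, mem_sdiff]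
  tauto

lemma card_interedges_add_sdiff [DecidableEq β] (A : Finset α) {Y B : Finset β} (h : Y ⊆ B) :
    #(Rel.interedges r A (B \ Y)) + #(Rel.interedges r A Y) = #(Rel.interedges r A B) := by
  classical
  simpa only [card_interedges_flip] using card_interedges_sdiff_add (fun b a ↦ r a b) h A

lemma card_interedges_eq_edgeDensity_mul (A : Finset α) (B : Finset β) :
    (#(Rel.interedges r A B) : ℚ) = Rel.edgeDensity r A B * (#A * #B) := by
  have := Rel.card_interedges_le_mul r A B
  rw [Rel.edgeDensity, div_mul_cancel_of_imp]
  intro h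
  norm_cast at h ⊢
  lia

lemma edgeDensity_flip (A : Finset α) (B : Finset β) :
    Rel.edgeDensity (fun b a ↦ r a b) B A = Rel.edgeDensity r A B := by
  rw [Rel.edgeDensity, Rel.edgeDensity, card_interedges_flip, mul_comm]

lemma exists_subset_card_eq_edgeDensity_le (A : Finset α) {B : Finset β} {s : ℕ} (hs₀ : s ≠ 0)
    (hs : s ≤ #B) : ∃ B' ⊆ B, #B' = s ∧ Rel.edgeDensity r A B ≤ Rel.edgeDensity r A B' := by
  obtain ⟨B', hB', rfl, h⟩ :=
    exists_subset_card_eq_mul_sum_le (fun b ↦ (#{a ∈ A | r a b} : ℚ)) hs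
  refine ⟨B', hB', rfl, ?_⟩
  have degree_sum (C : Finset β) :
      (#(Rel.interedges r A C) : ℚ) = ∑ b ∈ C, (#{a ∈ A | r a b} : ℚ) := by
    simp only [Rel.interedges, card_filter, sum_product_right, Nat.cast_sum]
  rw [← degree_sum, ← degree_sum] at h
  obtain rfl | hA := A.eq_empty_or_nonempty
  · simp
  have := hA.card_pos
  have := Nat.pos_of_ne_zero hs₀
  have : 0 < #B := by lia
  rw [Rel.edgeDensity, Rel.edgeDensity, div_le_div_iff₀ (by positivity) (by positivity)]
  linear_combination (#A : ℚ) * h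

/-- The potential `d(A, B) ^ 4 * min |A| |B|` of a pair of finite sets, weighing edge density
against size. The exponent must exceed `3` for
`IsPotentialMaximal.mul_card_le_card_interedges_of_le` to have a positive constant. -/
def densityPotential (A : Finset α) (B : Finset β) : ℚ :=
  Rel.edgeDensity r A B ^ 4 * min #A #B

/-- No pair of subsets has a larger density potential than `(A, B)`. Such pairs play the role of the
regular pairs of Szemerédi's lemma. -/
def IsPotentialMaximal (A : Finset α) (B : Finset β) : Prop :=
  ∀ A' ⊆ A, ∀ B' ⊆ B, densityPotential r A' B' ≤ densityPotential r A B

lemma densityPotential_flip (A : Finset α) (B : Finset β) :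
    densityPotential (fun b a ↦ r a b) B A = densityPotential r A B := by
  rw [densityPotential, densityPotential, edgeDensity_flip, min_comm]

lemma densityPotential_nonneg (A : Finset α) (B : Finset β) : 0 ≤ densityPotential r A B :=
  mul_nonneg (pow_nonneg (Rel.edgeDensity_nonneg r A B) 4) (Nat.cast_nonneg _)

variable {r} in
lemma IsPotentialMaximal.flip {A : Finset α} {B : Finset β} (h : IsPotentialMaximal r A B) :
    IsPotentialMaximal (fun b a ↦ r a b) B A := fun B' hB' A' hA' ↦ by
  simpa only [densityPotential_flip] using h A' hA' B' hB'

lemma exists_card_eq_card_densityPotential_le_of_card_le {A : Finset α} {B : Finset β}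
    (h : #A ≤ #B) :
    ∃ B' ⊆ B, #A = #B' ∧ densityPotential r A B ≤ densityPotential r A B' := by
  obtain rfl | hA := A.eq_empty_or_nonempty
  · exact ⟨∅, empty_subset _, rfl, by simp [densityPotential]⟩
  obtain ⟨B', hB', hcard, hd⟩ := exists_subset_card_eq_edgeDensity_le r A hA.card_ne_zero h
  refine ⟨B', hB', hcard.symm, ?_⟩
  rw [densityPotential, densityPotential, min_eq_left h, min_eq_left hcard.ge]
  have := Rel.edgeDensity_nonneg r A B
  gcongr

lemma exists_card_eq_card_densityPotential_le (A : Finset α) (B : Finset β) :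
    ∃ A' ⊆ A, ∃ B' ⊆ B, #A' = #B' ∧ densityPotential r A B ≤ densityPotential r A' B' := by
  obtain h | h := le_total #A #B
  · exact ⟨A, subset_rfl, exists_card_eq_card_densityPotential_le_of_card_le r h⟩
  · obtain ⟨A', hA', hcard, hle⟩ :=
      exists_card_eq_card_densityPotential_le_of_card_le (fun b a ↦ r a b) h
    exact ⟨A', hA', B, subset_rfl, hcard.symm, by simpa only [densityPotential_flip] using hle⟩

lemma exists_isPotentialMaximal (A : Finset α) (B : Finset β) :
    ∃ A' ⊆ A, ∃ B' ⊆ B, #A' = #B' ∧ densityPotential r A B ≤ densityPotential r A' B' ∧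
      IsPotentialMaximal r A' B' := by
  obtain ⟨⟨A₁, B₁⟩, hmem, hmax⟩ := (A.powerset ×ˢ B.powerset).exists_max_image
    (fun p ↦ densityPotential r p.1 p.2) ⟨(A, B), by simp⟩
  simp only [mem_product, mem_powerset, Prod.forall, and_imp] at hmem hmax
  obtain ⟨A', hA', B', hB', hcard, hle⟩ := exists_card_eq_card_densityPotential_le r A₁ B₁
  refine ⟨A', hA'.trans hmem.1, B', hB'.trans hmem.2, hcard,
    (hmax A B subset_rfl subset_rfl).trans hle, fun A₂ hA₂ B₂ hB₂ ↦ ?_⟩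
  exact (hmax A₂ B₂ (hA₂.trans (hA'.trans hmem.1)) (hB₂.trans (hB'.trans hmem.2))).trans hle

lemma mul_pow_three_le {K : Type*} [Field K] [LinearOrder K] [IsStrictOrderedRing K] (x y : K) :
    x * y ^ 3 ≤ ((x + 3 * y) / 4) ^ 4 := by
  have : 0 ≤ (x - y) ^ 2 * ((x + 7 * y) ^ 2 + 32 * y ^ 2) := by positivity
  linear_combination this / 256

namespace IsPotentialMaximal

variable {r} {A : Finset α} {B : Finset β} (h : IsPotentialMaximal r A B)
include h

lemma card_interedges_le {A' : Finset α} (hA' : A' ⊆ A) {B' : Finset β} (hB' : B' ⊆ B) :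
    (#(Rel.interedges r A' B') : ℚ) ≤
      Rel.edgeDensity r A B * ((min #A #B + 3 * min #A' #B') / 4) * max #A' #B' := by
  set d := Rel.edgeDensity r A B
  set d' := Rel.edgeDensity r A' B'
  set m := ((min #A #B : ℕ) : ℚ)
  set s := ((min #A' #B' : ℕ) : ℚ)
  have hd : 0 ≤ d := Rel.edgeDensity_nonneg r A B
  have hm : 0 ≤ m := by positivity
  have hs : 0 ≤ s := by positivity
  have potential_le : d' ^ 4 * s ≤ d ^ 4 * m := h A' hA' B' hB'
  have key : d' * s ≤ d * ((m + 3 * s) / 4) := by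
    refine le_of_pow_le_pow_left₀ four_ne_zero (by positivity) ?_
    calc (d' * s) ^ 4 = d' ^ 4 * s * s ^ 3 := by ring
      _ ≤ d ^ 4 * m * s ^ 3 := by gcongr
      _ = d ^ 4 * (m * s ^ 3) := by ring
      _ ≤ d ^ 4 * ((m + 3 * s) / 4) ^ 4 := by gcongr; exact mul_pow_three_le m s
      _ = _ := by ring
  calc (#(Rel.interedges r A' B') : ℚ) = d' * s * max #A' #B' := by
        rw [card_interedges_eq_edgeDensity_mul, mul_assoc, ← Nat.cast_mul, ← Nat.cast_mul,
          min_mul_max]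
    _ ≤ _ := mul_le_mul_of_nonneg_right key (Nat.cast_nonneg _)

lemma mul_card_le_card_interedges_of_le (hcard : #A = #B) {X : Finset α} (hX : X ⊆ A)
    {Y : Finset β} (hY : Y ⊆ B) (hXY : #A < #X + #Y) (hle : #Y ≤ #X) :
    Rel.edgeDensity r A B * #A / 8 * #Y ≤ #(Rel.interedges r X Y) := by
  classical
  set d := Rel.edgeDensity r A B
  have hd : 0 ≤ d := Rel.edgeDensity_nonneg r A B
  have hXA : #(A \ X) + #X = #A := card_sdiff_add_card_eq_card hX
  have hYB : #(B \ Y) + #Y = #A := hcard ▸ card_sdiff_add_card_eq_card hY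
  have e_left : (#(Rel.interedges r (A \ X) Y) : ℚ) ≤ d * ((#A + 3 * #(A \ X)) / 4) * #Y := by
    have := h.card_interedges_le (sdiff_subset (s := A) (t := X)) hY
    rwa [← hcard, min_self, min_eq_left (by lia), max_eq_right (by lia)] at this
  have e_right : (#(Rel.interedges r A (B \ Y)) : ℚ) ≤ d * ((#A + 3 * #(B \ Y)) / 4) * #A := by
    have := h.card_interedges_le subset_rfl (sdiff_subset (s := B) (t := Y))
    rwa [← hcard, min_self, min_eq_right (by lia), max_eq_left (by lia)] at this
  have e_total : d * (#A * #A) = #(Rel.interedges r A (B \ Y)) +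
      (#(Rel.interedges r (A \ X) Y) + #(Rel.interedges r X Y)) := by
    rw [← Nat.cast_add, card_interedges_sdiff_add r hX, ← Nat.cast_add,
      card_interedges_add_sdiff r A hY, card_interedges_eq_edgeDensity_mul, ← hcard]
  have hX_large : (#A : ℚ) ≤ 2 * #X := by norm_cast; lia
  have slack_nonneg : 0 ≤ d * #Y * (2 * #X - #A) := mul_nonneg (by positivity) (by linarith)
  have hXA' : (#(A \ X) : ℚ) = #A - #X := eq_sub_of_add_eq (mod_cast hXA)
  have hYB' : (#(B \ Y) : ℚ) = #A - #Y := eq_sub_of_add_eq (mod_cast hYB)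
  rw [hXA'] at e_left
  rw [hYB'] at e_right
  linear_combination e_left + e_right + e_total + 3 / 8 * slack_nonneg

lemma mul_min_card_le_card_interedges (hcard : #A = #B) {X : Finset α} (hX : X ⊆ A)
    {Y : Finset β} (hY : Y ⊆ B) (hXY : #A < #X + #Y) :
    Rel.edgeDensity r A B * #A / 8 * min #X #Y ≤ #(Rel.interedges r X Y) := by
  obtain hle | hle := le_total #Y #X
  · rw [min_eq_right hle]
    exact h.mul_card_le_card_interedges_of_le hcard hX hY hXY hle
  · rw [min_eq_left hle]
    simpa only [edgeDensity_flip, card_interedges_flip, hcard] using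
      h.flip.mul_card_le_card_interedges_of_le hcard.symm hY hX (by lia) hle

end IsPotentialMaximal

end Relation

/-! ### Disjoint perfect matchings -/

section Matchings

variable {α β : Type*}

/-- The equivalences `f i : α ≃ β`, seen as perfect matchings between `α` and `β`, consist of edges
of the relation `r` and are pairwise edge-disjoint. -/
structure IsDisjointMatchings {ι : Type*} (r : α → β → Prop) (f : ι → α ≃ β) : Prop where
  rel (i : ι) (a : α) : r a (f i a)
  injective_apply (a : α) : Function.Injective fun i ↦ f i a

lemma card_interedges_le_mul_min_of_forall_exists (r : α → β → Prop) [∀ a, DecidablePred (r a)]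
    {ι : Type*} [Fintype ι] (f : ι → α ≃ β) {X : Finset α} {Y : Finset β}
    (h : ∀ a ∈ X, ∀ b ∈ Y, r a b → ∃ i, f i a = b) :
    #(Rel.interedges r X Y) ≤ Fintype.card ι * min #X #Y := by
  classical
  rw [mul_min_of_nonneg _ _ (Nat.zero_le _), le_min_iff, ← card_univ, ← card_product,
    ← card_product]
  constructor
  · refine card_le_card_of_surjOn (fun p ↦ (p.2, f p.1 p.2)) fun ⟨a, b⟩ hab ↦ ?_
    obtain ⟨ha, hb, hr⟩ := Rel.mk_mem_interedges_iff.1 hab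
    obtain ⟨i, rfl⟩ := h a ha b hb hr
    exact ⟨(i, a), by simpa using ha, rfl⟩
  · refine card_le_card_of_surjOn (fun p ↦ ((f p.1).symm p.2, p.2)) fun ⟨a, b⟩ hab ↦ ?_
    obtain ⟨ha, hb, hr⟩ := Rel.mk_mem_interedges_iff.1 hab
    obtain ⟨i, rfl⟩ := h a ha b hb hr
    exact ⟨(i, f i a), by simpa using hb, by simp⟩

variable [Fintype α] [Fintype β]

lemma exists_equiv_of_forall_exists_rel (r : α → β → Prop)
    (hcard : Fintype.card α = Fintype.card β)
    (h : ∀ (X : Finset α) (Y : Finset β), Fintype.card α < #X + #Y → ∃ a ∈ X, ∃ b ∈ Y, r a b) :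
    ∃ g : α ≃ β, ∀ a, r a (g a) := by
  classical
  obtain ⟨g, hg, hr⟩ :=
    (Fintype.all_card_le_filter_rel_iff_exists_injective r).1 fun X ↦ by
      by_contra! hlt
      set N : Finset β := {b | ∃ a ∈ X, r a b}
      obtain ⟨a, ha, b, hb, hab⟩ := h X Nᶜ (by
        have := card_add_card_compl N
        lia)
      exact mem_compl.1 hb (mem_filter.2 ⟨mem_univ b, a, ha, hab⟩)
  exact ⟨.ofBijective g ((Fintype.bijective_iff_injective_and_card g).2 ⟨hg, hcard⟩), hr⟩

lemma exists_isDisjointMatchings_of_forall_lt (r : α → β → Prop) [∀ a, DecidablePred (r a)]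
    (hcard : Fintype.card α = Fintype.card β) {k : ℕ}
    (h : ∀ i < k, ∀ (X : Finset α) (Y : Finset β), Fintype.card α < #X + #Y →
      i * min #X #Y < #(Rel.interedges r X Y)) :
    ∃ f : Fin k → α ≃ β, IsDisjointMatchings r f := by
  induction k with
  | zero => exact ⟨Fin.elim0, fun i ↦ i.elim0, fun _ i ↦ i.elim0⟩
  | succ k ih =>
    obtain ⟨f, hf⟩ := ih fun i hi ↦ h i (by lia)
    obtain ⟨g, hg⟩ : ∃ g : α ≃ β, ∀ a, r a (g a) ∧ ∀ i, f i a ≠ g a := by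
      refine exists_equiv_of_forall_exists_rel (fun a b ↦ r a b ∧ ∀ i, f i a ≠ b) hcard
        fun X Y hXY ↦ ?_
      by_contra! hcover
      exact (h k k.lt_succ_self X Y hXY).not_ge <| by
        simpa using card_interedges_le_mul_min_of_forall_exists r f hcover
    refine ⟨Fin.snoc f g, fun i ↦ ?_, fun a ↦ ?_⟩
    · induction i using Fin.lastCases with
      | last => simpa using fun a ↦ (hg a).1
      | cast i => simpa using hf.rel i
    · have : (fun i ↦ (Fin.snoc f g : Fin (k + 1) → α ≃ β) i a) =
          Fin.snoc (fun i ↦ f i a) (g a) := by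
        ext i
        induction i using Fin.lastCases <;> simp
      rw [this, Fin.snoc_injective_iff]
      exact ⟨hf.injective_apply a, fun ⟨i, hi⟩ ↦ (hg a).2 i hi⟩

end Matchings

section MatchingsInPairs

variable {α β : Type*} (r : α → β → Prop) [∀ a, DecidablePred (r a)] {A : Finset α} {B : Finset β}

variable {r} in
lemma IsPotentialMaximal.exists_isDisjointMatchings (h : IsPotentialMaximal r A B)
    (hcard : #A = #B) :
    ∃ f : Fin ⌈Rel.edgeDensity r A B * #A / 8⌉₊ → A ≃ B,
      IsDisjointMatchings (fun (a : A) (b : B) ↦ r a b) f := by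
  refine exists_isDisjointMatchings_of_forall_lt _ (by simpa using hcard) fun i hi X Y hXY ↦ ?_
  rw [Fintype.card_coe] at hXY
  have hX : #X ≤ #A := by simpa using card_le_univ X
  have hY : #Y ≤ #B := by simpa using card_le_univ Y
  have hmin : 0 < min #X #Y := by lia
  have many_edges := h.mul_min_card_le_card_interedges hcard (map_subtype_subset X)
    (map_subtype_subset Y) (by simpa using hXY)
  rw [← card_interedges_map r, card_map, card_map] at many_edges
  rw [← Nat.cast_lt (α := ℚ), Nat.cast_mul]
  refine lt_of_lt_of_le ?_ many_edges
  gcongr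
  exact Nat.lt_ceil.1 hi

lemma densityPotential_sq_div_le (h : #A = #B) :
    densityPotential r A B ^ 2 / 8 ≤ ⌈Rel.edgeDensity r A B * #A / 8⌉₊ * #A := by
  set d := Rel.edgeDensity r A B
  have hd₀ : 0 ≤ d := Rel.edgeDensity_nonneg r A B
  have hd₁ : d ≤ 1 := Rel.edgeDensity_le_one r A B
  calc densityPotential r A B ^ 2 / 8
      = d ^ 8 * (#A ^ 2 / 8) := by rw [densityPotential, ← h, min_self]; ring
    _ ≤ d * (#A ^ 2 / 8) := by gcongr; exact pow_le_of_le_one hd₀ hd₁ (by norm_num)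
    _ = d * #A / 8 * #A := by ring
    _ ≤ ⌈d * #A / 8⌉₊ * #A := by gcongr; exact Nat.le_ceil _

lemma exists_isDisjointMatchings_densityPotential_sq_le (A : Finset α) (B : Finset β) :
    ∃ A' ⊆ A, ∃ B' ⊆ B, ∃ (k : ℕ) (f : Fin k → A' ≃ B'),
      IsDisjointMatchings (fun (a : A') (b : B') ↦ r a b) f ∧
      densityPotential r A B ^ 2 / 8 ≤ k * #A' := by
  obtain ⟨A', hA', B', hB', hcard, hle, hmax⟩ := exists_isPotentialMaximal r A B
  obtain ⟨f, hf⟩ := hmax.exists_isDisjointMatchings hcard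
  have := densityPotential_nonneg r A B
  refine ⟨A', hA', B', hB', _, f, hf, le_trans ?_ (densityPotential_sq_div_le r hcard)⟩
  gcongr

lemma pow_four_mul_le_densityPotential {t n : ℝ} (ht : 0 ≤ t) (hA : #A ≤ n) (hB : #B ≤ n)
    (h : t * n ^ 2 ≤ #(Rel.interedges r A B)) : t ^ 4 * n ≤ densityPotential r A B := by
  have hn : 0 ≤ n := (Nat.cast_nonneg _).trans hA
  obtain rfl | hn := hn.eq_or_lt
  · simpa using densityPotential_nonneg r A B
  have hd : (0 : ℝ) ≤ Rel.edgeDensity r A B := mod_cast Rel.edgeDensity_nonneg r A B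
  have h_edges : (#(Rel.interedges r A B) : ℝ) = Rel.edgeDensity r A B * (#A * #B) := by
    exact_mod_cast card_interedges_eq_edgeDensity_mul r A B
  set d := (Rel.edgeDensity r A B : ℝ)
  have ht_le : t ≤ d := by
    refine le_of_mul_le_mul_right ?_ (pow_pos hn 2)
    calc t * n ^ 2 ≤ d * (#A * #B) := h.trans_eq h_edges
      _ ≤ d * (n * n) := by gcongr
      _ = d * n ^ 2 := by ring
  have hmin : t * n ≤ d * (min #A #B : ℕ) := by
    refine le_of_mul_le_mul_right ?_ hn
    calc t * n * n = t * n ^ 2 := by ring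
      _ ≤ d * (#A * #B) := h.trans_eq h_edges
      _ = d * (min #A #B : ℕ) * (max #A #B : ℕ) := by
        rw [mul_assoc, ← Nat.cast_mul, ← Nat.cast_mul, min_mul_max]
      _ ≤ d * (min #A #B : ℕ) * n := by
        gcongr
        rw [Nat.cast_max]
        exact max_le hA hB
  calc t ^ 4 * n = t ^ 3 * (t * n) := by ring
    _ ≤ d ^ 3 * (d * (min #A #B : ℕ)) := by gcongr
    _ = d ^ 4 * (min #A #B : ℕ) := by ring
    _ = densityPotential r A B := by rw [densityPotential]; push_cast; rfl

end MatchingsInPairs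

/-! ### Interval colorings of unions of matchings -/

section Coloring

variable {V ι α β : Type*}

/-- The edge joining the `p.2`-th vertex of one class to its partner in the `p.1`-th matching, where
`u` and `v` list the vertices of the two classes. -/
def matchingEdge (u : α → V) (v : β → V) (f : ι → α ≃ β) (p : ι × α) : Sym2 V :=
  s(u p.2, v (f p.1 p.2))

/-- The bipartite graph on `V` formed by all the edges of the matchings `f i`. -/
def matchingUnion (u : α → V) (v : β → V) (f : ι → α ≃ β) : SimpleGraph V :=
  .fromEdgeSet (Set.range (matchingEdge u v f))

lemma mem_matchingEdge {u : α → V} {v : β → V} {f : ι → α ≃ β} {p : ι × α} {w : V} :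
    w ∈ matchingEdge u v f p ↔ w = u p.2 ∨ w = v (f p.1 p.2) :=
  Sym2.mem_iff

lemma matchingUnion_le {G : SimpleGraph V} {u : α → V} {v : β → V} {f : ι → α ≃ β}
    (h : ∀ i a, G.Adj (u a) (v (f i a))) : matchingUnion u v f ≤ G := by
  rw [matchingUnion, ← G.fromEdgeSet_edgeSet]
  refine SimpleGraph.fromEdgeSet_mono ?_
  rintro _ ⟨p, rfl⟩
  exact h p.1 p.2

lemma edgeSet_matchingUnion {u : α → V} {v : β → V} (huv : ∀ a b, u a ≠ v b) (f : ι → α ≃ β) :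
    (matchingUnion u v f).edgeSet = Set.range (matchingEdge u v f) := by
  rw [matchingUnion, SimpleGraph.edgeSet_fromEdgeSet, sdiff_eq_left, Set.disjoint_left]
  rintro _ ⟨p, rfl⟩ hdiag
  exact huv _ _ hdiag

variable {r : α → β → Prop} {u : α → V} {v : β → V} (hu : u.Injective) (hv : v.Injective)
  (huv : ∀ a b, u a ≠ v b)
include hu hv huv

lemma IsDisjointMatchings.injective_matchingEdge {f : ι → α ≃ β} (hf : IsDisjointMatchings r f) :
    (matchingEdge u v f).Injective := by
  rintro ⟨i, a⟩ ⟨j, b⟩ h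
  obtain ⟨hab, hij⟩ | ⟨hab, -⟩ := Sym2.eq_iff.1 h
  · obtain rfl := hu hab
    exact congrArg (·, a) (hf.injective_apply a (hv hij))
  · exact absurd hab (huv _ _)

lemma IsDisjointMatchings.ncard_edgeSet_matchingUnion {f : ι → α ≃ β}
    (hf : IsDisjointMatchings r f) :
    (matchingUnion u v f).edgeSet.ncard = Nat.card ι * Nat.card α := by
  rw [edgeSet_matchingUnion huv, Set.ncard_range_of_injective
    (hf.injective_matchingEdge hu hv huv), Nat.card_prod]

lemma IsDisjointMatchings.intervalColorable_matchingUnion {k : ℕ} {f : Fin k → α ≃ β}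
    (hf : IsDisjointMatchings r f) : IntervalColorable (matchingUnion u v f) := by
  have hinj := hf.injective_matchingEdge hu hv huv
  refine ⟨Function.extend (matchingEdge u v f) (fun p ↦ (p.1 : ℤ)) 0, ?_, ?_⟩
  · simp only [edgeSet_matchingUnion huv, Set.forall_mem_range, hinj.extend_apply]
    rintro ⟨i, a⟩ ⟨j, b⟩ hne ⟨w, hwa, hwb⟩ hij
    obtain rfl : i = j := by simpa [Fin.ext_iff] using hij
    simp only [mem_matchingEdge] at hwa hwb
    apply hne
    obtain rfl | rfl := hwa
    · rw [hu (hwb.resolve_right (huv _ _))]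
    · rw [(f i).injective (hv (hwb.resolve_left (huv _ _).symm))]
  · simp only [edgeSet_matchingUnion huv, Set.exists_range_iff, hinj.extend_apply]
    rintro w _ y _ hxy hyz ⟨⟨i, a⟩, hwa, rfl⟩ ⟨⟨j, b⟩, -, rfl⟩
    obtain ⟨l, rfl⟩ : ∃ l : Fin k, (l : ℤ) = y :=
      ⟨⟨y.toNat, by grind⟩, Int.toNat_of_nonneg (by grind)⟩
    obtain rfl | rfl := mem_matchingEdge.1 hwa
    · exact ⟨(l, a), mem_matchingEdge.2 (.inl rfl), rfl⟩
    · exact ⟨(l, (f l).symm (f i a)), mem_matchingEdge.2 (.inr (by simp)), rfl⟩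

end Coloring

/-! ### Peeling off interval colorable subgraphs -/

section Graph

variable {V : Type*}

lemma four_mul_card_filter_mem_notMem [Fintype V] [DecidableEq V] {x y : V} (h : x ≠ y) :
    4 * #{P : Finset V | x ∈ P ∧ y ∉ P} = 2 ^ Fintype.card V := by
  have hIcc : ({P : Finset V | x ∈ P ∧ y ∉ P} : Finset (Finset V)) = Icc {x} {y}ᶜ := by
    ext P
    simp [subset_compl_comm (s := P)]
  have : Nontrivial V := ⟨x, y, h⟩
  have := Fintype.one_lt_card (α := V)
  rw [hIcc, card_Icc_finset (by simpa using h.symm), card_compl, card_singleton, card_singleton,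
    show 4 = 2 ^ 2 from rfl, ← pow_add]
  congr 1
  lia

lemma exists_card_edgeFinset_le_two_mul_card_interedges_compl [Fintype V] [DecidableEq V]
    (G : SimpleGraph V) [DecidableRel G.Adj] :
    ∃ P : Finset V, #G.edgeFinset ≤ 2 * #(G.interedges P Pᶜ) := by
  suffices h : ∑ _P : Finset V, 2 * #G.edgeFinset ≤ ∑ P, 4 * #(G.interedges P Pᶜ) by
    obtain ⟨P, -, hP⟩ := exists_le_of_sum_le univ_nonempty h
    exact ⟨P, by lia⟩
  refine Eq.le ?_
  calc ∑ _P : Finset V, 2 * #G.edgeFinset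
      = ∑ p : V × V with G.Adj p.1 p.2, 2 ^ Fintype.card V := by
        rw [G.two_mul_card_edgeFinset, sum_const, sum_const, card_univ, Fintype.card_finset,
          smul_eq_mul, smul_eq_mul, mul_comm]
    _ = ∑ p : V × V with G.Adj p.1 p.2, 4 * #{P : Finset V | p.1 ∈ P ∧ p.2 ∉ P} :=
        sum_congr rfl fun p hp ↦
          (four_mul_card_filter_mem_notMem (mem_filter.1 hp).2.ne).symm
    _ = ∑ P, 4 * #(G.interedges P Pᶜ) := by
        rw [← mul_sum, ← mul_sum]
        congr 1
        refine (sum_card_bipartiteAbove_eq_sum_card_bipartiteBelow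
          fun (p : V × V) P ↦ p.1 ∈ P ∧ p.2 ∉ P).trans (sum_congr rfl fun P _ ↦ congrArg card ?_)
        ext p
        simp [bipartiteBelow, SimpleGraph.interedges, Rel.mem_interedges_iff, and_comm, and_assoc]

lemma exists_le_intervalColorable_of_disjoint (G : SimpleGraph V) [DecidableRel G.Adj]
    {A B : Finset V} (h : Disjoint A B) :
    ∃ H ≤ G, IntervalColorable H ∧ densityPotential G.Adj A B ^ 2 / 8 ≤ H.edgeSet.ncard := by
  obtain ⟨A', hA', B', hB', k, f, hf, hle⟩ :=
    exists_isDisjointMatchings_densityPotential_sq_le G.Adj A B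
  have hu : Function.Injective ((↑) : A' → V) := Subtype.val_injective
  have hv : Function.Injective ((↑) : B' → V) := Subtype.val_injective
  have huv (a : A') (b : B') : (a : V) ≠ b := disjoint_iff_ne.1 h a (hA' a.2) b (hB' b.2)
  refine ⟨_, matchingUnion_le hf.rel, hf.intervalColorable_matchingUnion hu hv huv,
    hle.trans_eq ?_⟩
  rw [hf.ncard_edgeSet_matchingUnion hu hv huv]
  simp

lemma exists_le_intervalColorable_of_lt [Fintype V] {γ : ℝ} (hγ : 0 < γ) (G : SimpleGraph V)
    (hG : γ * (Fintype.card V : ℝ) ^ 2 < G.edgeSet.ncard) :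
    ∃ H ≤ G, IntervalColorable H ∧
      (γ / 2) ^ 8 / 8 * (Fintype.card V : ℝ) ^ 2 ≤ H.edgeSet.ncard := by
  classical
  set n := (Fintype.card V : ℝ)
  obtain ⟨P, hP⟩ := exists_card_edgeFinset_le_two_mul_card_interedges_compl G
  obtain ⟨H, hHG, hH, hle⟩ :=
    exists_le_intervalColorable_of_disjoint G (disjoint_compl_right (a := P))
  refine ⟨H, hHG, hH, ?_⟩
  have h_cut : γ / 2 * n ^ 2 ≤ #(G.interedges P Pᶜ) := by
    rw [← G.coe_edgeFinset, Set.ncard_coe_finset] at hG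
    have : (#G.edgeFinset : ℝ) ≤ 2 * #(G.interedges P Pᶜ) := mod_cast hP
    linarith
  have h_potential : (γ / 2) ^ 4 * n ≤ densityPotential G.Adj P Pᶜ :=
    pow_four_mul_le_densityPotential G.Adj (by positivity) (Nat.cast_le.2 (card_le_univ _))
      (Nat.cast_le.2 (card_le_univ _)) h_cut
  calc (γ / 2) ^ 8 / 8 * n ^ 2 = ((γ / 2) ^ 4 * n) ^ 2 / 8 := by ring
    _ ≤ (densityPotential G.Adj P Pᶜ : ℝ) ^ 2 / 8 := by gcongr
    _ ≤ H.edgeSet.ncard := mod_cast hle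

lemma intervalColorable_bot : IntervalColorable (⊥ : SimpleGraph V) :=
  ⟨0, by simp, by simp⟩

lemma intervalThicknessLE_bot (k : ℕ) : IntervalThicknessLE (⊥ : SimpleGraph V) (k + 1) :=
  ⟨0, fun i ↦ by simpa using intervalColorable_bot⟩

lemma IntervalThicknessLE.sup {G H : SimpleGraph V} {k : ℕ} (hG : IntervalThicknessLE G k)
    (hH : IntervalColorable H) (hGH : Disjoint G H) : IntervalThicknessLE (G ⊔ H) (k + 1) := by
  classical
  obtain ⟨f, hf⟩ := hG
  have hdisj := SimpleGraph.disjoint_edgeSet.2 hGH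
  refine ⟨fun e ↦ if e ∈ H.edgeSet then Fin.last k else (f e).castSucc, fun i ↦ ?_⟩
  induction i using Fin.lastCases with
  | last =>
    convert hH
    rw [← H.fromEdgeSet_edgeSet]
    congr 1
    ext e
    by_cases he : e ∈ H.edgeSet <;> simp [he, (Fin.castSucc_lt_last _).ne]
  | cast i =>
    convert hf i using 3
    ext e
    by_cases he : e ∈ H.edgeSet
    · simp [he, Set.disjoint_right.1 hdisj he, (Fin.castSucc_lt_last _).ne']
    · simp [he]

lemma exists_le_intervalThicknessLE_of_forall [Finite V] {c d : ℝ}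
    (h : ∀ G : SimpleGraph V, c < G.edgeSet.ncard →
      ∃ H ≤ G, IntervalColorable H ∧ d ≤ H.edgeSet.ncard)
    {N : ℕ} {G : SimpleGraph V} (hG : G.edgeSet.ncard ≤ c + N * d) :
    ∃ G' ≤ G, IntervalThicknessLE G' (N + 1) ∧
      (G.edgeSet.ncard : ℝ) - G'.edgeSet.ncard ≤ c := by
  have ncard_sdiff {G H : SimpleGraph V} (hle : H ≤ G) :
      ((G \ H).edgeSet.ncard : ℝ) = G.edgeSet.ncard - H.edgeSet.ncard := by
    rw [SimpleGraph.edgeSet_sdiff, eq_sub_iff_add_eq]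
    exact_mod_cast Set.ncard_sdiff_add_ncard_of_subset (SimpleGraph.edgeSet_subset_edgeSet.2 hle)
  induction N generalizing G with
  | zero => exact ⟨⊥, bot_le, intervalThicknessLE_bot 0, by simpa using hG⟩
  | succ N ih =>
    obtain hle | hlt := le_or_gt (G.edgeSet.ncard : ℝ) c
    · exact ⟨⊥, bot_le, intervalThicknessLE_bot _, by simpa using hle⟩
    obtain ⟨H, hHG, hH, hd⟩ := h G hlt
    obtain ⟨G', hG', hthick, hmiss⟩ := ih (G := G \ H) (by
      rw [ncard_sdiff hHG]
      push_cast at hG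
      linarith)
    have hle : G' ⊔ H ≤ G := sup_le (hG'.trans sdiff_le) hHG
    refine ⟨G' ⊔ H, hle, hthick.sup hH (disjoint_sdiff_self_left.mono_left hG'), ?_⟩
    rwa [← ncard_sdiff hle, sup_comm, ← sdiff_sdiff, ncard_sdiff hG']

lemma two_mul_ncard_edgeSet_le_sq [Fintype V] (G : SimpleGraph V) :
    2 * G.edgeSet.ncard ≤ Fintype.card V ^ 2 := by
  classical
  rw [← G.coe_edgeFinset, Set.ncard_coe_finset, G.two_mul_card_edgeFinset, sq, ← Fintype.card_prod]
  exact card_le_univ _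

theorem stmt12_general [Fintype V] {γ : ℝ} (hγ : 0 < γ) (G : SimpleGraph V) :
    ∃ G' ≤ G, IntervalThicknessLE G' (⌈4 * (2 / γ) ^ 8⌉₊ + 1) ∧
      (G.edgeSet.ncard : ℝ) - G'.edgeSet.ncard ≤ γ * (Fintype.card V : ℝ) ^ 2 := by
  refine exists_le_intervalThicknessLE_of_forall
    (fun G hG ↦ exists_le_intervalColorable_of_lt hγ G hG) ?_
  have h_edges : 2 * (G.edgeSet.ncard : ℝ) ≤ (Fintype.card V : ℝ) ^ 2 :=
    mod_cast two_mul_ncard_edgeSet_le_sq G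
  set n := (Fintype.card V : ℝ)
  calc (G.edgeSet.ncard : ℝ) ≤ n ^ 2 / 2 := by linarith
    _ = 4 * (2 / γ) ^ 8 * ((γ / 2) ^ 8 / 8 * n ^ 2) := by field_simp; ring
    _ ≤ ⌈4 * (2 / γ) ^ 8⌉₊ * ((γ / 2) ^ 8 / 8 * n ^ 2) := by gcongr; exact Nat.le_ceil _
    _ ≤ _ := le_add_of_nonneg_left (by positivity)

end Graph

/-- For every `0 < γ < 1/2` there is `M` such that every finite graph `G` has a
subgraph `G'` with interval thickness at most `M` missing at most `γ|V(G)|²` edges. -/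
theorem stmt12 (γ : ℝ) (hγ1 : 0 < γ) (hγ2 : γ < 1/2) :
    ∃ M : ℕ, ∀ (V : Type) [Fintype V] (G : SimpleGraph V),
      ∃ G' : SimpleGraph V, G' ≤ G ∧ IntervalThicknessLE G' M ∧
        (G.edgeSet.ncard : ℝ) - (G'.edgeSet.ncard : ℝ) ≤ γ * (Fintype.card V : ℝ) ^ 2 :=
  ⟨_, fun _ _ G ↦ stmt12_general hγ1 G⟩
end

section
/- For any natural numbers k and d there exists a finite bipartite graph G that is interval colorable and whose interval spectrum S(G) has exactly k gaps, each of size at least d. -/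
/-- The interval spectrum of `G`: the set of `t` such that `G` has an interval
edge-coloring using exactly `t` distinct colors. -/
def intervalSpectrum {V : Type*} (G : SimpleGraph V) : Set ℕ :=
  {t | ∃ c : Sym2 V → ℤ, IsIntervalColoring G c ∧
    {x : ℤ | ∃ e ∈ G.edgeSet, c e = x}.ncard = t}

/-- `[a, b]` is a gap of `S ⊆ ℕ`: a maximal nonempty run of consecutive integers
disjoint from `S`, lying strictly between elements of `S`. -/
def IsGap (S : Set ℕ) (a b : ℕ) : Prop :=
  0 < a ∧ a ≤ b ∧ (∀ x, a ≤ x → x ≤ b → x ∉ S) ∧ (a - 1) ∈ S ∧ (b + 1) ∈ S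

/-! A hub is joined to `q` shared vertices, common to all hubs, and to leaves of its own, each of
which is also joined to a companion of the hub. The companion forces the leaf colors of a hub to be
almost an interval, so all but two of the shared edges at each hub have a color below or above all
leaf colors. If `q` exceeds twice the number of hubs, some shared vertex is extreme in this sense at
every hub: starting from the nearly common color of its edges, each hub extends upwards or downwards
by its number of leaves. When the hubs have `0, D, …, (k + 1) D` leaves, the largest one extends one
way and the farthest one extending the other way has `j D` leaves for some `j ≤ k`, so the number of
colors is within a bounded distance of `(k + 1 + j) D`, and every `j` occurs. Independent edges
added to the graph fill each of these `k + 1` clusters up to an interval, and a large `D` makes the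
`k` gaps between them long. -/

open Set
open scoped Pointwise

lemma ncard_Ico_int (a b : ℤ) : (Ico a b).ncard = (b - a).toNat := by
  rw [← Finset.coe_Ico, ncard_coe_finset, Int.card_Ico]

/-- `f` labels the elements of `s` bijectively by the elements of an interval of integers. This is
the condition that an interval coloring satisfies at each vertex, `s` being the incident edges. -/
def IsIntervalLabeling {α : Type*} (s : Set α) (f : α → ℤ) : Prop :=
  s.InjOn f ∧ (f '' s).OrdConnected

namespace IsIntervalLabeling

variable {α β : Type*} {s u : Set α} {f : α → ℤ} {x y : α}

lemma image_iff {g : β → α} {s : Set β} (hg : s.InjOn g) :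
    IsIntervalLabeling (g '' s) f ↔ IsIntervalLabeling s (f ∘ g) := by
  rw [IsIntervalLabeling, IsIntervalLabeling, image_comp, hg.comp_iff]

lemma range_iff {g : β → α} (hg : g.Injective) :
    IsIntervalLabeling (range g) f ↔ IsIntervalLabeling univ (f ∘ g) := by
  rw [← image_univ, image_iff hg.injOn]

lemma singleton (x : α) (f : α → ℤ) : IsIntervalLabeling {x} f :=
  ⟨injOn_singleton f x, by rw [image_singleton]; exact ordConnected_singleton⟩

lemma neg (hf : IsIntervalLabeling s f) : IsIntervalLabeling s (-f) := by
  refine ⟨neg_injective.comp_injOn hf.1, ⟨?_⟩⟩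
  rintro _ ⟨x, hx, rfl⟩ _ ⟨y, hy, rfl⟩ z ⟨hxz, hzy⟩
  obtain ⟨w, hw, hwz⟩ := hf.2.out (mem_image_of_mem f hy) (mem_image_of_mem f hx)
    (show -z ∈ _ from ⟨le_neg_of_le_neg hzy, neg_le_of_neg_le hxz⟩)
  exact ⟨w, hw, neg_eq_iff_eq_neg.2 hwz⟩

lemma exists_image_eq_Ico (hf : IsIntervalLabeling s f) (hs : s.Finite) (hne : s.Nonempty) :
    ∃ m : ℤ, f '' s = Ico m (m + s.ncard) := by
  have hfin := hs.image f
  have himage := ((hne.image f).ordConnected_iff_of_bdd hfin.bddBelow hfin.bddAbove).1 hf.2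
  set m := sInf (f '' s)
  set M := sSup (f '' s)
  have hIco : f '' s = Ico m (M + 1) := by
    rw [himage, Ico_add_one_right_eq_Icc]
  have hlt : m < M + 1 := nonempty_Ico.1 (hIco ▸ hne.image f)
  have hcard : s.ncard = (M + 1 - m).toNat := by
    rw [← ncard_Ico_int, ← hIco, hf.1.ncard_image]
  exact ⟨m, by rw [hIco]; congr 1; omega⟩

lemma of_injOn_of_mapsTo_Ico {m : ℤ} (hinj : s.InjOn f)
    (hmaps : MapsTo f s (Ico m (m + s.ncard))) : IsIntervalLabeling s f := by
  have himage : f '' s = Ico m (m + s.ncard) := by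
    refine eq_of_subset_of_ncard_le hmaps.image_subset ?_ (finite_Ico _ _)
    rw [hinj.ncard_image, ncard_Ico_int]
    omega
  exact ⟨hinj, himage ▸ ordConnected_Ico⟩

lemma sub_lt_ncard (hf : IsIntervalLabeling s f) (hs : s.Finite) (hx : x ∈ s) (hy : y ∈ s) :
    f x - f y < s.ncard := by
  obtain ⟨m, hm⟩ := hf.exists_image_eq_Ico hs ⟨x, hx⟩
  have hfx : f x ∈ Ico m (m + s.ncard) := hm ▸ mem_image_of_mem f hx
  have hfy : f y ∈ Ico m (m + s.ncard) := hm ▸ mem_image_of_mem f hy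
  linarith [hfx.2, hfy.1]

lemma add_ncard_mem_image (hf : IsIntervalLabeling s f) (hs : s.Finite) (hx : x ∈ s) (hus : u ⊆ s)
    (hu : ∀ z ∈ u, f x < f z) : f x + u.ncard ∈ f '' s := by
  obtain ⟨m, hm⟩ := hf.exists_image_eq_Ico hs ⟨x, hx⟩
  have hfx : f x ∈ Ico m (m + s.ncard) := hm ▸ mem_image_of_mem f hx
  have hsub : f '' u ⊆ Ico (f x + 1) (m + s.ncard) := by
    rintro _ ⟨z, hz, rfl⟩
    have hfz : f z ∈ Ico m (m + s.ncard) := hm ▸ mem_image_of_mem f (hus hz)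
    exact ⟨hu z hz, hfz.2⟩
  have hcard := ncard_le_ncard hsub (finite_Ico _ _)
  rw [(hf.1.mono hus).ncard_image, ncard_Ico_int] at hcard
  obtain ⟨hmx, hxm⟩ := hfx
  rw [hm]
  constructor <;> omega

lemma sub_ncard_mem_image (hf : IsIntervalLabeling s f) (hs : s.Finite) (hx : x ∈ s) (hus : u ⊆ s)
    (hu : ∀ z ∈ u, f z < f x) : f x - u.ncard ∈ f '' s := by
  obtain ⟨y, hy, hyx⟩ := hf.neg.add_ncard_mem_image hs hx hus fun z hz => neg_lt_neg (hu z hz)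
  exact ⟨y, hy, by simp only [Pi.neg_apply] at hyx; omega⟩

lemma Icc_subset_image_of_lt (hf : IsIntervalLabeling s f) (hs : s.Finite) (hx : x ∈ s)
    (hus : u ⊆ s) (hu : ∀ z ∈ u, f x < f z) : Icc (f x) (f x + u.ncard) ⊆ f '' s :=
  hf.2.out (mem_image_of_mem f hx) (hf.add_ncard_mem_image hs hx hus hu)

lemma Icc_subset_image_of_gt (hf : IsIntervalLabeling s f) (hs : s.Finite) (hx : x ∈ s)
    (hus : u ⊆ s) (hu : ∀ z ∈ u, f z < f x) : Icc (f x - u.ncard) (f x) ⊆ f '' s :=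
  hf.2.out (hf.sub_ncard_mem_image hs hx hus hu) (mem_image_of_mem f hx)

lemma image_subset_Ioo_of_lt (hf : IsIntervalLabeling s f) (hs : s.Finite) (hx : x ∈ s)
    (hus : u ⊆ s) (hu : ∀ z ∈ u, f x < f z) :
    f '' s ⊆ Ioo (f x + u.ncard - s.ncard) (f x + s.ncard) := by
  rintro _ ⟨y, hy, rfl⟩
  obtain ⟨w, hw, hwx⟩ := hf.add_ncard_mem_image hs hx hus hu
  have hwy := hf.sub_lt_ncard hs hw hy
  have hyx := hf.sub_lt_ncard hs hy hx
  constructor <;> linarith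

lemma image_subset_Ioo_of_gt (hf : IsIntervalLabeling s f) (hs : s.Finite) (hx : x ∈ s)
    (hus : u ⊆ s) (hu : ∀ z ∈ u, f z < f x) :
    f '' s ⊆ Ioo (f x - s.ncard) (f x - u.ncard + s.ncard) := by
  rintro _ ⟨y, hy, rfl⟩
  obtain ⟨w, hw, hwx⟩ := hf.sub_ncard_mem_image hs hx hus hu
  have hyw := hf.sub_lt_ncard hs hy hw
  have hxy := hf.sub_lt_ncard hs hx hy
  constructor <;> linarith

lemma pair_iff (hxy : x ≠ y) : IsIntervalLabeling {x, y} f ↔ |f x - f y| = 1 := by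
  constructor
  · intro hf
    have hfin : ({x, y} : Set α).Finite := toFinite _
    have hne : f x ≠ f y := fun h => hxy (hf.1 (.inl rfl) (.inr rfl) h)
    have hxy_lt := hf.sub_lt_ncard hfin (.inl rfl) (.inr rfl)
    have hyx_lt := hf.sub_lt_ncard hfin (.inr rfl) (.inl rfl)
    rw [ncard_pair hxy] at hxy_lt hyx_lt
    rw [abs_eq zero_le_one]
    omega
  · intro hf
    rw [abs_eq zero_le_one] at hf
    refine of_injOn_of_mapsTo_Ico (m := min (f x) (f y)) ?_ ?_
    · rw [injOn_pair]
      omega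
    · rw [ncard_pair hxy]
      rintro z (rfl | rfl) <;> constructor <;> omega

/-- Labels of `u` within distance one of an interval labeling occupy at most `u.ncard + 2`
consecutive integers, of which only two are left for labels from outside `u`. -/
lemma ncard_between_le_two {w : α → ℤ} (hw : IsIntervalLabeling u w) (hu : u.Finite)
    (hfw : ∀ x ∈ u, |f x - w x| ≤ 1) (hf : (s ∪ u).InjOn f) (hdisj : Disjoint s u)
    (hbetween : ∀ x ∈ s, (∃ y ∈ u, f y < f x) ∧ ∃ y ∈ u, f x < f y) : s.ncard ≤ 2 := by
  obtain rfl | hne := u.eq_empty_or_nonempty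
  · have : s = ∅ := eq_empty_of_forall_notMem fun x hx => by
      obtain ⟨⟨y, hy, -⟩, -⟩ := hbetween x hx
      exact hy
    simp [this]
  obtain ⟨m, hm⟩ := hw.exists_image_eq_Ico hu hne
  have hu_mem : ∀ x ∈ u, f x ∈ Ico (m - 1) (m + u.ncard + 1) := by
    intro x hx
    have hwx : w x ∈ Ico m (m + u.ncard) := hm ▸ mem_image_of_mem w hx
    have := abs_le.1 (hfw x hx)
    constructor <;> linarith [hwx.1, hwx.2]
  have hsub : f '' (s ∪ u) ⊆ Ico (m - 1) (m + u.ncard + 1) := by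
    rintro _ ⟨x, hx | hx, rfl⟩
    · obtain ⟨⟨y, hy, hyx⟩, z, hz, hxz⟩ := hbetween x hx
      exact ⟨(hu_mem y hy).1.trans hyx.le, hxz.trans (hu_mem z hz).2⟩
    · exact hu_mem x hx
  have hs : s.Finite := (Finite.of_finite_image ((finite_Ico _ _).subset hsub) hf).subset
    subset_union_left
  have hcard := ncard_le_ncard hsub (finite_Ico _ _)
  rw [hf.ncard_image, ncard_union_eq hdisj hs hu, ncard_Ico_int] at hcard
  omega

end IsIntervalLabeling

lemma isIntervalColoring_iff {V : Type*} {G : SimpleGraph V} {c : Sym2 V → ℤ} :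
    IsIntervalColoring G c ↔ ∀ v, IsIntervalLabeling (G.incidenceSet v) c := by
  constructor
  · rintro ⟨hproper, hinterval⟩ v
    refine ⟨fun e he f hf hef => ?_, ⟨?_⟩⟩
    · by_contra hne
      exact hproper e he.1 f hf.1 hne ⟨v, he.2, hf.2⟩ hef
    · rintro _ ⟨e, he, rfl⟩ _ ⟨f, hf, rfl⟩ y ⟨hey, hyf⟩
      obtain ⟨g, hg, hvg, rfl⟩ :=
        hinterval v _ y _ hey hyf ⟨e, he.1, he.2, rfl⟩ ⟨f, hf.1, hf.2, rfl⟩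
      exact ⟨g, ⟨hg, hvg⟩, rfl⟩
  · intro h
    refine ⟨fun e he f hf hne ⟨v, hve, hvf⟩ hef => hne ((h v).1 ⟨he, hve⟩ ⟨hf, hvf⟩ hef), ?_⟩
    rintro v x y z hxy hyz ⟨e, he, hve, rfl⟩ ⟨f, hf, hvf, rfl⟩
    obtain ⟨g, hg, rfl⟩ := (h v).2.out ⟨e, ⟨he, hve⟩, rfl⟩ ⟨f, ⟨hf, hvf⟩, rfl⟩ ⟨hxy, hyz⟩
    exact ⟨g, hg.1, hg.2, rfl⟩

lemma mem_intervalSpectrum {V : Type*} {G : SimpleGraph V} {T : ℕ} :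
    T ∈ intervalSpectrum G ↔ ∃ c, IsIntervalColoring G c ∧ (c '' G.edgeSet).ncard = T :=
  Iff.rfl

section Iso

variable {V W : Type*} {G : SimpleGraph V} {H : SimpleGraph W}

lemma sym2_map_surjective (e : V ≃ W) : (Sym2.map e).Surjective := fun x =>
  ⟨x.map e.symm, by simp [Sym2.map_map]⟩

lemma image_map_incidenceSet (e : G ≃g H) (v : V) :
    Sym2.map e '' G.incidenceSet v = H.incidenceSet (e v) := by
  ext x
  obtain ⟨x, rfl⟩ := sym2_map_surjective e.toEquiv x
  change Sym2.map e x ∈ _ ↔ Sym2.map e x ∈ _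
  rw [(Sym2.map.injective e.injective).mem_set_image, SimpleGraph.incidenceSet,
    SimpleGraph.incidenceSet, mem_ofPred_eq, mem_ofPred_eq, e.map_mem_edgeSet_iff, Sym2.mem_map]
  simp

lemma IsIntervalColoring.comp_iso {c : Sym2 W → ℤ} (hc : IsIntervalColoring H c) (e : G ≃g H) :
    IsIntervalColoring G (c ∘ Sym2.map e) := by
  rw [isIntervalColoring_iff] at hc ⊢
  intro v
  rw [← IsIntervalLabeling.image_iff (Sym2.map.injective e.injective).injOn,
    image_map_incidenceSet]
  exact hc (e v)

lemma intervalSpectrum_subset_of_iso (e : G ≃g H) : intervalSpectrum H ⊆ intervalSpectrum G := by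
  rintro _ ⟨c, hc, rfl⟩
  refine ⟨_, hc.comp_iso e, congrArg ncard ?_⟩
  change (c ∘ Sym2.map e) '' G.edgeSet = c '' H.edgeSet
  rw [image_comp, ← SimpleGraph.Embedding.preimage_edgeSet e.toEmbedding]
  exact congrArg _ (image_preimage_eq _ (sym2_map_surjective e.toEquiv))

lemma intervalSpectrum_congr (e : G ≃g H) : intervalSpectrum G = intervalSpectrum H :=
  (intervalSpectrum_subset_of_iso e.symm).antisymm (intervalSpectrum_subset_of_iso e)

end Iso

section BipartiteGraph

variable {L R : Type*}

/-- The bipartite graph on the disjoint union of `L` and `R` whose edges are the pairs related by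
`A`. -/
def bipartiteGraph (A : L → R → Prop) : SimpleGraph (L ⊕ R) where
  Adj
    | .inl l, .inr r => A l r
    | .inr r, .inl l => A l r
    | _, _ => False
  symm := ⟨by rintro (l | r) (l' | r') h <;> exact h⟩
  loopless := ⟨by rintro (l | r) h <;> exact h⟩

/-- `f` is an interval coloring of `bipartiteGraph A`, with `f l r` the color of the edge `lr`. The
values of `f` off `A` are irrelevant. -/
def IsBipartiteIntervalColoring (A : L → R → Prop) (f : L → R → ℤ) : Prop :=
  (∀ l, IsIntervalLabeling {r | A l r} (f l)) ∧ ∀ r, IsIntervalLabeling {l | A l r} fun l => f l r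

/-- The set of colors that `f` uses on the edges of `bipartiteGraph A`. -/
def colorSet (A : L → R → Prop) (f : L → R → ℤ) : Set ℤ :=
  {x | ∃ l r, A l r ∧ f l r = x}

variable {A : L → R → Prop} {f : L → R → ℤ}

lemma bipartiteGraph_colorable_two (A : L → R → Prop) : (bipartiteGraph A).Colorable 2 := by
  have hcolorable : (completeBipartiteGraph L R).Colorable 2 := by
    simpa using (SimpleGraph.CompleteBipartiteGraph.bicoloring L R).colorable
  refine hcolorable.mono_left ?_
  rintro (l | r) (l' | r') h <;> simp_all [bipartiteGraph]

lemma mem_edgeSet_bipartiteGraph {e : Sym2 (L ⊕ R)} :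
    e ∈ (bipartiteGraph A).edgeSet ↔ ∃ l r, A l r ∧ s(.inl l, .inr r) = e := by
  induction e using Sym2.ind with
  | _ x y => rcases x with l | r <;> rcases y with l' | r' <;> simp [bipartiteGraph]

lemma incidenceSet_bipartiteGraph_inl (l : L) :
    (bipartiteGraph A).incidenceSet (.inl l) = (fun r => s(.inl l, .inr r)) '' {r | A l r} := by
  ext e
  simp only [SimpleGraph.incidenceSet, mem_ofPred_eq, mem_edgeSet_bipartiteGraph, mem_image]
  constructor
  · rintro ⟨⟨l', r, h, rfl⟩, hl⟩
    obtain rfl : l = l' := by simpa using hl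
    exact ⟨r, h, rfl⟩
  · rintro ⟨r, h, rfl⟩
    exact ⟨⟨l, r, h, rfl⟩, Sym2.mem_mk_left _ _⟩

lemma incidenceSet_bipartiteGraph_inr (r : R) :
    (bipartiteGraph A).incidenceSet (.inr r) = (fun l => s(.inl l, .inr r)) '' {l | A l r} := by
  ext e
  simp only [SimpleGraph.incidenceSet, mem_ofPred_eq, mem_edgeSet_bipartiteGraph, mem_image]
  constructor
  · rintro ⟨⟨l, r', h, rfl⟩, hr⟩
    obtain rfl : r = r' := by simpa using hr
    exact ⟨l, h, rfl⟩
  · rintro ⟨l, h, rfl⟩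
    exact ⟨⟨l, r, h, rfl⟩, Sym2.mem_mk_right _ _⟩

lemma isIntervalColoring_bipartiteGraph_iff {c : Sym2 (L ⊕ R) → ℤ} :
    IsIntervalColoring (bipartiteGraph A) c ↔
      IsBipartiteIntervalColoring A fun l r => c s(.inl l, .inr r) := by
  have hinl (l : L) : Function.Injective fun r : R => s(Sum.inl l, Sum.inr r) := fun r r' => by simp
  have hinr (r : R) : Function.Injective fun l : L => s(Sum.inl l, Sum.inr r) := fun l l' => by simp
  rw [isIntervalColoring_iff, Sum.forall]
  simp only [incidenceSet_bipartiteGraph_inl, incidenceSet_bipartiteGraph_inr,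
    IsIntervalLabeling.image_iff (hinl _).injOn, IsIntervalLabeling.image_iff (hinr _).injOn]
  rfl

lemma image_edgeSet_bipartiteGraph (c : Sym2 (L ⊕ R) → ℤ) :
    c '' (bipartiteGraph A).edgeSet = colorSet A fun l r => c s(.inl l, .inr r) := by
  ext x
  simp only [mem_image, mem_edgeSet_bipartiteGraph, colorSet, mem_ofPred_eq]
  constructor
  · rintro ⟨_, ⟨l, r, h, rfl⟩, hx⟩
    exact ⟨l, r, h, hx⟩
  · rintro ⟨l, r, h, hx⟩
    exact ⟨_, ⟨l, r, h, rfl⟩, hx⟩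

lemma exists_sym2_extension (f : L → R → ℤ) :
    ∃ c : Sym2 (L ⊕ R) → ℤ, (fun l r => c s(.inl l, .inr r)) = f := by
  let g : L ⊕ R → L ⊕ R → ℤ
    | .inl l, .inr r => f l r
    | .inr r, .inl l => f l r
    | _, _ => 0
  have hg : ∀ x y, g x y = g y x := by rintro (l | r) (l' | r') <;> rfl
  exact ⟨Sym2.lift ⟨g, hg⟩, rfl⟩

lemma mem_intervalSpectrum_bipartiteGraph {T : ℕ} :
    T ∈ intervalSpectrum (bipartiteGraph A) ↔
      ∃ f, IsBipartiteIntervalColoring A f ∧ (colorSet A f).ncard = T := by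
  simp only [mem_intervalSpectrum, isIntervalColoring_bipartiteGraph_iff,
    image_edgeSet_bipartiteGraph]
  constructor
  · rintro ⟨c, hc, hT⟩
    exact ⟨_, hc, hT⟩
  · rintro ⟨f, hf, hT⟩
    obtain ⟨c, rfl⟩ := exists_sym2_extension f
    exact ⟨c, hf, hT⟩

lemma colorSet_finite [Finite L] [Finite R] (A : L → R → Prop) (f : L → R → ℤ) :
    (colorSet A f).Finite := by
  refine (finite_range (Function.uncurry f)).subset ?_
  rintro _ ⟨l, r, -, rfl⟩
  exact ⟨(l, r), rfl⟩

end BipartiteGraph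

section Matching

variable {L R ι : Type*} {A : L → R → Prop}

lemma isBipartiteIntervalColoring_liftRel_eq {f : L ⊕ ι → R ⊕ ι → ℤ} :
    IsBipartiteIntervalColoring (Sum.LiftRel A Eq) f ↔
      IsBipartiteIntervalColoring A fun l r => f (.inl l) (.inl r) := by
  have hrow (l : L) : {r | Sum.LiftRel A (Eq (α := ι)) (.inl l) r} = Sum.inl '' {r | A l r} := by
    ext (r | r) <;> simp
  have hcol (r : R) : {l | Sum.LiftRel A (Eq (α := ι)) l (.inl r)} = Sum.inl '' {l | A l r} := by
    ext (l | l) <;> simp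
  have hrow' (i : ι) : {r | Sum.LiftRel A (Eq (α := ι)) (.inr i) r} = {.inr i} := by
    ext (r | r) <;> simp [eq_comm]
  have hcol' (i : ι) : {l | Sum.LiftRel A (Eq (α := ι)) l (.inr i)} = {.inr i} := by
    ext (l | l) <;> simp
  simp only [IsBipartiteIntervalColoring, Sum.forall, hrow, hcol, hrow', hcol',
    IsIntervalLabeling.image_iff Sum.inl_injective.injOn, IsIntervalLabeling.singleton,
    implies_true, and_true]
  rfl

lemma colorSet_liftRel_eq (f : L ⊕ ι → R ⊕ ι → ℤ) :
    colorSet (Sum.LiftRel A Eq) f =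
      colorSet A (fun l r => f (.inl l) (.inl r)) ∪ range fun i => f (.inr i) (.inr i) := by
  ext x
  simp [colorSet]

lemma exists_ncard_union_range_eq {K : Set ℤ} (hK : K.Finite) (hne : K.Nonempty) {t T : ℕ}
    (hKT : K.ncard ≤ T) (hTK : T ≤ K.ncard + t) :
    ∃ g : Fin t → ℤ, (K ∪ range g).ncard = T := by
  obtain ⟨a, ha⟩ := hne
  let fresh : ℕ ↪ (Kᶜ : Set ℤ) := hK.infinite_compl.natEmbedding
  have hfresh : (fun i => (fresh i : ℤ)).Injective := Subtype.val_injective.comp fresh.injective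
  let g (i : Fin t) : ℤ := if (i : ℕ) < T - K.ncard then fresh i else a
  have hunion : K ∪ range g = K ∪ (fun i => (fresh i : ℤ)) '' Iio (T - K.ncard) := by
    refine (union_subset subset_union_left ?_).antisymm (union_subset_union_right _ ?_)
    · rintro _ ⟨i, rfl⟩
      by_cases hi : (i : ℕ) < T - K.ncard
      · exact .inr ⟨i, hi, (if_pos hi).symm⟩
      · exact .inl (by simpa only [g, if_neg hi] using ha)
    · rintro _ ⟨i, hi, rfl⟩
      rw [mem_Iio] at hi
      exact ⟨⟨i, by omega⟩, if_pos hi⟩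
  have hdisj : Disjoint K ((fun i => (fresh i : ℤ)) '' Iio (T - K.ncard)) := by
    rw [disjoint_right]
    rintro _ ⟨i, -, rfl⟩
    exact (fresh i).2
  refine ⟨g, ?_⟩
  rw [hunion, ncard_union_eq hdisj hK ((finite_Iio _).image _), ncard_image_of_injective _ hfresh,
    ← Finset.coe_Iio, ncard_coe_finset, Nat.card_Iio]
  omega

/-- The `t` added edges are independent, so an interval coloring may give them any colors. -/
lemma intervalSpectrum_liftRel_eq [Finite L] [Finite R] (hA : ∃ l r, A l r) (t : ℕ) :
    intervalSpectrum (bipartiteGraph (Sum.LiftRel A (Eq (α := Fin t)))) =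
      intervalSpectrum (bipartiteGraph A) + Icc 0 t := by
  ext T
  simp only [mem_add, mem_intervalSpectrum_bipartiteGraph, isBipartiteIntervalColoring_liftRel_eq,
    colorSet_liftRel_eq]
  constructor
  · rintro ⟨f, hf, rfl⟩
    set K := colorSet A fun l r => f (.inl l) (.inl r)
    set E := range fun i => f (.inr i) (.inr i)
    have hlower : K.ncard ≤ (K ∪ E).ncard :=
      ncard_le_ncard subset_union_left ((colorSet_finite _ _).union (finite_range _))
    have hupper : (K ∪ E).ncard ≤ K.ncard + E.ncard := ncard_union_le _ _
    have hE : E.ncard ≤ t := by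
      rw [← Nat.card_coe_set_eq]
      exact (Finite.card_range_le _).trans_eq (Nat.card_fin t)
    exact ⟨_, ⟨_, hf, rfl⟩, (K ∪ E).ncard - K.ncard, ⟨Nat.zero_le _, by omega⟩,
      Nat.add_sub_of_le hlower⟩
  · rintro ⟨_, ⟨f, hf, rfl⟩, i, hi, rfl⟩
    obtain ⟨l, r, hlr⟩ := hA
    obtain ⟨g, hg⟩ := exists_ncard_union_range_eq (colorSet_finite A f) ⟨_, l, r, hlr, rfl⟩
      (Nat.le_add_right _ i) (Nat.add_le_add_left hi.2 _)
    exact ⟨Sum.elim (fun l => Sum.elim (f l) 0) fun i _ => g i, hf, hg⟩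

end Matching

section Hub

variable {ι κ : Type*} {n : ι → ℕ}

/-- The edge relation of the hub graph. Its left vertices are hubs `.inl j` and companions `.inr j`;
its right vertices are shared vertices `.inl i`, adjacent to every hub, and leaves `.inr ⟨j, c⟩`,
adjacent to the hub `j` and to its companion. -/
def hubRel (κ : Type*) (n : ι → ℕ) : ι ⊕ ι → κ ⊕ (Σ j, Fin (n j)) → Prop
  | .inl _, .inl _ => True
  | .inr _, .inl _ => False
  | .inl j, .inr p => p.1 = j
  | .inr j, .inr p => p.1 = j

/-- The labeling that an edge labeling of the hub graph induces on the edges at the hub `j`. -/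
def hubLabel (f : ι ⊕ ι → κ ⊕ (Σ j, Fin (n j)) → ℤ) (j : ι) : κ ⊕ Fin (n j) → ℤ :=
  fun x => f (.inl j) (x.map id (Sigma.mk j))

/-- The labeling that an edge labeling of the hub graph induces on the edges at the companion of the
hub `j`. -/
def companionLabel (f : ι ⊕ ι → κ ⊕ (Σ j, Fin (n j)) → ℤ) (j : ι) : Fin (n j) → ℤ :=
  fun c => f (.inr j) (.inr ⟨j, c⟩)

variable {f : ι ⊕ ι → κ ⊕ (Σ j, Fin (n j)) → ℤ}

lemma isBipartiteIntervalColoring_hubRel_iff :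
    IsBipartiteIntervalColoring (hubRel κ n) f ↔
      (∀ j, IsIntervalLabeling univ (hubLabel f j)) ∧
      (∀ j, IsIntervalLabeling univ (companionLabel f j)) ∧
      (∀ i, IsIntervalLabeling univ fun j => hubLabel f j (.inl i)) ∧
      ∀ j c, |hubLabel f j (.inr c) - companionLabel f j c| = 1 := by
  have hmem (j : ι) (p : Σ j, Fin (n j)) : (∃ c, Sigma.mk j c = p) ↔ p.1 = j :=
    Set.ext_iff.1 (range_sigmaMk j) p
  have hmk (j : ι) : Function.Injective (Sigma.mk (β := fun j => Fin (n j)) j) := sigma_mk_injective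
  have hhub (j : ι) : {r | hubRel κ n (.inl j) r} = range (Sum.map id (Sigma.mk j)) := by
    ext (i | p)
    · simp [hubRel]
    · simpa [hubRel] using (hmem j p).symm
  have hcompanion (j : ι) : {r | hubRel κ n (.inr j) r} = range (Sum.inr ∘ Sigma.mk j) := by
    ext (i | p)
    · simp [hubRel]
    · simpa [hubRel] using (hmem j p).symm
  have hshared (i : κ) : {l | hubRel κ n l (.inl i)} = range Sum.inl := by
    ext (j | j) <;> simp [hubRel]
  have hleaf (p : Σ j, Fin (n j)) : {l | hubRel κ n l (.inr p)} = {.inl p.1, .inr p.1} := by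
    ext (j | j) <;> simp [hubRel, eq_comm]
  simp only [IsBipartiteIntervalColoring, Sum.forall, hhub, hcompanion, hshared, hleaf,
    IsIntervalLabeling.range_iff (Function.injective_id.sumMap (hmk _)),
    IsIntervalLabeling.range_iff (Sum.inr_injective.comp (hmk _)),
    IsIntervalLabeling.range_iff Sum.inl_injective, IsIntervalLabeling.pair_iff Sum.inl_ne_inr,
    Sigma.forall]
  exact and_assoc

lemma colorSet_hubRel :
    colorSet (hubRel κ n) f = (⋃ j, range (hubLabel f j)) ∪ ⋃ j, range (companionLabel f j) := by
  ext x
  simp [colorSet, hubRel, hubLabel, companionLabel]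

/-- At each hub `j` the edge to the shared vertex `i` has a color below those of all leaf edges if
`j ∈ U`, and above them if `j ∉ U`. -/
def IsPivot (f : ι ⊕ ι → κ ⊕ (Σ j, Fin (n j)) → ℤ) (U : Finset ι) (i : κ) : Prop :=
  (∀ j ∈ U, ∀ c, hubLabel f j (.inl i) < hubLabel f j (.inr c)) ∧
    ∀ j ∉ U, ∀ c, hubLabel f j (.inr c) < hubLabel f j (.inl i)

/-- A hub and its companion see nearly the same colors on their common leaves, and the colors at the
companion form an interval, so at most two shared edges have a color between leaf colors. -/
lemma ncard_not_extreme_le_two (hf : IsBipartiteIntervalColoring (hubRel κ n) f) (j : ι) :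
    {i : κ | (∃ c, hubLabel f j (.inr c) < hubLabel f j (.inl i)) ∧
      ∃ c, hubLabel f j (.inl i) < hubLabel f j (.inr c)}.ncard ≤ 2 := by
  obtain ⟨hhub, hcompanion, -, hleaf⟩ := isBipartiteIntervalColoring_hubRel_iff.1 hf
  rw [← ncard_image_of_injective _ (Sum.inl_injective (β := Fin (n j)))]
  have hw : IsIntervalLabeling (range Sum.inr) (Sum.elim (0 : κ → ℤ) (companionLabel f j)) :=
    (IsIntervalLabeling.range_iff Sum.inr_injective).2 (hcompanion j)
  refine hw.ncard_between_le_two (f := hubLabel f j) (finite_range _) ?_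
    ((hhub j).1.mono (subset_univ _)) ?_ ?_
  · rintro _ ⟨c, rfl⟩
    exact (hleaf j c).le
  · rw [disjoint_left]
    rintro _ ⟨i, -, rfl⟩ ⟨c, hc⟩
    exact Sum.inr_ne_inl hc
  · rintro _ ⟨i, ⟨⟨c, hc⟩, c', hc'⟩, rfl⟩
    exact ⟨⟨_, ⟨c, rfl⟩, hc⟩, _, ⟨c', rfl⟩, hc'⟩

lemma exists_isPivot [Fintype ι] [Fintype κ] (hcard : 2 * Fintype.card ι < Fintype.card κ)
    (hf : IsBipartiteIntervalColoring (hubRel κ n) f) : ∃ U i, IsPivot f U i := by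
  set bad : ι → Set κ := fun j => {i | (∃ c, hubLabel f j (.inr c) < hubLabel f j (.inl i)) ∧
    ∃ c, hubLabel f j (.inl i) < hubLabel f j (.inr c)}
  have hbad : (⋃ j, bad j).ncard < Fintype.card κ := by
    calc (⋃ j, bad j).ncard ≤ ∑ j, (bad j).ncard := ncard_iUnion_le_of_fintype bad
      _ ≤ Fintype.card ι • 2 :=
        Finset.sum_le_card_nsmul _ _ _ fun j _ => ncard_not_extreme_le_two hf j
      _ < Fintype.card κ := by rwa [smul_eq_mul, mul_comm]
  obtain ⟨i, hi⟩ : ∃ i, i ∉ ⋃ j, bad j := by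
    by_contra! h
    rw [eq_univ_of_forall h, ncard_univ, Nat.card_eq_fintype_card] at hbad
    exact hbad.false
  rw [mem_iUnion, not_exists] at hi
  have hne (j : ι) (c : Fin (n j)) : hubLabel f j (.inl i) ≠ hubLabel f j (.inr c) := fun h =>
    Sum.inl_ne_inr (((isBipartiteIntervalColoring_hubRel_iff.1 hf).1 j).1 trivial trivial h)
  refine ⟨(toFinite {j | ∀ c, hubLabel f j (.inl i) < hubLabel f j (.inr c)}).toFinset, i, ?_, ?_⟩
  · exact fun j hj => (Finite.mem_toFinset _).1 hj
  intro j hj c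
  rw [Finite.mem_toFinset] at hj
  by_contra! hc
  refine hj fun c' => (hne j c').lt_of_le ?_
  by_contra! hc'
  exact hi j ⟨⟨c', hc'⟩, c, (hne j c).lt_of_le hc⟩

lemma range_hubLabel_subset_colorSet (f : ι ⊕ ι → κ ⊕ (Σ j, Fin (n j)) → ℤ) (j : ι) :
    range (hubLabel f j) ⊆ colorSet (hubRel κ n) f := by
  rw [colorSet_hubRel]
  exact subset_union_of_subset_left (subset_iUnion (fun j => range (hubLabel f j)) j) _

namespace IsPivot

variable [Finite κ] {U : Finset ι} {i : κ} {j : ι}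

lemma Icc_subset_colorSet_of_mem (hi : IsPivot f U i)
    (hf : IsBipartiteIntervalColoring (hubRel κ n) f) (hj : j ∈ U) :
    Icc (hubLabel f j (.inl i)) (hubLabel f j (.inl i) + n j) ⊆ colorSet (hubRel κ n) f := by
  have hhub := (isBipartiteIntervalColoring_hubRel_iff.1 hf).1 j
  have hsub := hhub.Icc_subset_image_of_lt finite_univ trivial (subset_univ (range .inr))
    (forall_mem_range.2 (hi.1 j hj))
  rw [ncard_range_of_injective Sum.inr_injective, Nat.card_fin, image_univ] at hsub
  exact hsub.trans (range_hubLabel_subset_colorSet f j)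

lemma Icc_subset_colorSet_of_notMem (hi : IsPivot f U i)
    (hf : IsBipartiteIntervalColoring (hubRel κ n) f) (hj : j ∉ U) :
    Icc (hubLabel f j (.inl i) - n j) (hubLabel f j (.inl i)) ⊆ colorSet (hubRel κ n) f := by
  have hhub := (isBipartiteIntervalColoring_hubRel_iff.1 hf).1 j
  have hsub := hhub.Icc_subset_image_of_gt finite_univ trivial (subset_univ (range .inr))
    (forall_mem_range.2 (hi.2 j hj))
  rw [ncard_range_of_injective Sum.inr_injective, Nat.card_fin, image_univ] at hsub
  exact hsub.trans (range_hubLabel_subset_colorSet f j)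

lemma range_hubLabel_subset_of_mem (hi : IsPivot f U i)
    (hf : IsBipartiteIntervalColoring (hubRel κ n) f) (hj : j ∈ U) :
    range (hubLabel f j) ⊆
      Ioo (hubLabel f j (.inl i) - Nat.card κ) (hubLabel f j (.inl i) + n j + Nat.card κ) := by
  have hhub := (isBipartiteIntervalColoring_hubRel_iff.1 hf).1 j
  have hsub := hhub.image_subset_Ioo_of_lt finite_univ trivial (subset_univ (range .inr))
    (forall_mem_range.2 (hi.1 j hj))
  rw [ncard_range_of_injective Sum.inr_injective, ncard_univ, Nat.card_sum, Nat.card_fin,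
    image_univ] at hsub
  exact hsub.trans (Ioo_subset_Ioo (by omega) (by omega))

lemma range_hubLabel_subset_of_notMem (hi : IsPivot f U i)
    (hf : IsBipartiteIntervalColoring (hubRel κ n) f) (hj : j ∉ U) :
    range (hubLabel f j) ⊆
      Ioo (hubLabel f j (.inl i) - n j - Nat.card κ) (hubLabel f j (.inl i) + Nat.card κ) := by
  have hhub := (isBipartiteIntervalColoring_hubRel_iff.1 hf).1 j
  have hsub := hhub.image_subset_Ioo_of_gt finite_univ trivial (subset_univ (range .inr))
    (forall_mem_range.2 (hi.2 j hj))
  rw [ncard_range_of_injective Sum.inr_injective, ncard_univ, Nat.card_sum, Nat.card_fin,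
    image_univ] at hsub
  exact hsub.trans (Ioo_subset_Ioo (by omega) (by omega))

end IsPivot

lemma exists_range_hubLabel_eq_Ico [Finite ι] [Nonempty ι]
    (hf : IsBipartiteIntervalColoring (hubRel κ n) f) (i : κ) :
    ∃ p : ℤ, range (fun j => hubLabel f j (.inl i)) = Ico p (p + Nat.card ι) := by
  obtain ⟨-, -, hshared, -⟩ := isBipartiteIntervalColoring_hubRel_iff.1 hf
  simpa using (hshared i).exists_image_eq_Ico finite_univ univ_nonempty

lemma colorSet_hubRel_subset_Icc (hf : IsBipartiteIntervalColoring (hubRel κ n) f) {l u : ℤ}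
    (h : ∀ j, range (hubLabel f j) ⊆ Ioo l u) : colorSet (hubRel κ n) f ⊆ Icc l u := by
  obtain ⟨-, -, -, hleaf⟩ := isBipartiteIntervalColoring_hubRel_iff.1 hf
  rw [colorSet_hubRel]
  refine union_subset (iUnion_subset fun j => (h j).trans Ioo_subset_Icc_self) ?_
  refine iUnion_subset fun j => range_subset_iff.2 fun c => ?_
  obtain ⟨hl, hu⟩ := h j (mem_range_self (.inr c))
  have := (abs_eq zero_le_one).1 (hleaf j c)
  constructor <;> omega

namespace IsPivot

variable [Fintype ι] [DecidableEq ι] [Finite κ] {U : Finset ι} {i : κ} {p : ℤ}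

lemma colorSet_subset_Icc (hi : IsPivot f U i)
    (hf : IsBipartiteIntervalColoring (hubRel κ n) f)
    (hp : range (fun j => hubLabel f j (.inl i)) = Ico p (p + Nat.card ι)) :
    colorSet (hubRel κ n) f ⊆
      Icc (p - Uᶜ.sup n - Nat.card κ) (p + Nat.card ι - 1 + U.sup n + Nat.card κ) := by
  refine colorSet_hubRel_subset_Icc hf fun j => ?_
  have hpj : hubLabel f j (.inl i) ∈ Ico p (p + Nat.card ι) := hp ▸ mem_range_self j
  rw [mem_Ico] at hpj
  by_cases hj : j ∈ U
  · have hle : n j ≤ U.sup n := Finset.le_sup hj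
    exact (hi.range_hubLabel_subset_of_mem hf hj).trans (Ioo_subset_Ioo (by omega) (by omega))
  · have hle : n j ≤ Uᶜ.sup n := Finset.le_sup (Finset.mem_compl.2 hj)
    exact (hi.range_hubLabel_subset_of_notMem hf hj).trans (Ioo_subset_Ioo (by omega) (by omega))

lemma Icc_subset_colorSet [Nonempty ι] (hi : IsPivot f U i)
    (hf : IsBipartiteIntervalColoring (hubRel κ n) f)
    (hp : range (fun j => hubLabel f j (.inl i)) = Ico p (p + Nat.card ι)) :
    Icc (p + Nat.card ι - 1 - Uᶜ.sup n) (p + U.sup n) ⊆ colorSet (hubRel κ n) f := by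
  have hpj (j : ι) : hubLabel f j (.inl i) ∈ Ico p (p + Nat.card ι) := hp ▸ mem_range_self j
  have hshared : Ico p (p + Nat.card ι) ⊆ colorSet (hubRel κ n) f := by
    rw [← hp, range_subset_iff]
    exact fun j => range_hubLabel_subset_colorSet f j (mem_range_self _)
  have hpos : 0 < Nat.card ι := Nat.card_pos
  rintro x ⟨hlx, hxu⟩
  obtain hxp | hpx := lt_or_ge x p
  · obtain hU | hU := Uᶜ.eq_empty_or_nonempty
    · simp only [hU, Finset.sup_empty, bot_eq_zero] at hlx
      omega
    · obtain ⟨j, hj, hsup⟩ := Finset.exists_mem_eq_sup _ hU n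
      obtain ⟨hjp, hpj⟩ := hpj j
      exact hi.Icc_subset_colorSet_of_notMem hf (Finset.mem_compl.1 hj) ⟨by omega, by omega⟩
  obtain hxN | hNx := lt_or_ge x (p + Nat.card ι)
  · exact hshared ⟨hpx, hxN⟩
  · obtain rfl | hU := U.eq_empty_or_nonempty
    · simp only [Finset.sup_empty, bot_eq_zero] at hxu
      omega
    · obtain ⟨j, hj, hsup⟩ := Finset.exists_mem_eq_sup _ hU n
      obtain ⟨hjp, hpj⟩ := hpj j
      exact hi.Icc_subset_colorSet_of_mem hf hj ⟨by omega, by omega⟩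

lemma ncard_colorSet_mem_Icc [Nonempty ι] (hi : IsPivot f U i)
    (hf : IsBipartiteIntervalColoring (hubRel κ n) f) :
    ((colorSet (hubRel κ n) f).ncard : ℤ) ∈
      Icc (U.sup n + Uᶜ.sup n - Nat.card ι : ℤ)
        (U.sup n + Uᶜ.sup n + Nat.card ι + 2 * Nat.card κ) := by
  obtain ⟨p, hp⟩ := exists_range_hubLabel_eq_Ico hf i
  have hlower := ncard_le_ncard (hi.Icc_subset_colorSet hf hp) (colorSet_finite _ _)
  have hupper := ncard_le_ncard (hi.colorSet_subset_Icc hf hp) (finite_Icc _ _)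
  rw [← Ico_add_one_right_eq_Icc, ncard_Ico_int] at hlower hupper
  constructor <;> omega

end IsPivot

section HubColoring

variable {N q : ℕ} {n : Fin N → ℕ}

/-- The interval coloring of the hub graph in which the shared edges at the hub `j` have colors
`j, …, j + q - 1`, continued by the leaf edges upwards if `j ∈ U` and downwards if `j ∉ U`. -/
def hubColoring (q : ℕ) (n : Fin N → ℕ) (U : Finset (Fin N)) :
    Fin N ⊕ Fin N → Fin q ⊕ (Σ j, Fin (n j)) → ℤ
  | .inl j, .inl i => j + i
  | .inr _, .inl _ => 0
  | .inl _, .inr ⟨j, c⟩ => if j ∈ U then (j + q + c : ℤ) else (j - 1 - c : ℤ)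
  | .inr _, .inr ⟨j, c⟩ => (if j ∈ U then (j + q + c : ℤ) else (j - 1 - c : ℤ)) + 1

variable (U : Finset (Fin N)) (j : Fin N)

lemma hubLabel_hubColoring : hubLabel (hubColoring q n U) j =
    Sum.elim (fun i : Fin q => (j + i : ℤ))
      fun c : Fin (n j) => if j ∈ U then (j + q + c : ℤ) else (j - 1 - c : ℤ) := by
  ext (i | c) <;> rfl

lemma companionLabel_hubColoring : companionLabel (hubColoring q n U) j =
    fun c : Fin (n j) => (if j ∈ U then (j + q + c : ℤ) else (j - 1 - c : ℤ)) + 1 :=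
  rfl

lemma isIntervalLabeling_hubLabel_hubColoring :
    IsIntervalLabeling univ (hubLabel (hubColoring q n U) j) := by
  rw [hubLabel_hubColoring]
  refine .of_injOn_of_mapsTo_Ico (m := if j ∈ U then (j : ℤ) else j - n j) (injOn_univ.2 ?_) ?_
  · rintro (x | x) (y | y) h <;> grind
  · rw [ncard_univ, Nat.card_sum, Nat.card_fin, Nat.card_fin]
    rintro (x | x) - <;> simp only [Sum.elim_inl, Sum.elim_inr, mem_Ico] <;> split_ifs <;> omega

lemma isIntervalLabeling_companionLabel_hubColoring :
    IsIntervalLabeling univ (companionLabel (hubColoring q n U) j) := by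
  rw [companionLabel_hubColoring]
  refine .of_injOn_of_mapsTo_Ico (m := if j ∈ U then (j + q + 1 : ℤ) else j - n j + 1)
    (injOn_univ.2 fun x y h => ?_) fun x _ => ?_
  · split_ifs at h <;> omega
  · simp only [ncard_univ, Nat.card_fin, mem_Ico]
    split_ifs <;> omega

lemma isBipartiteIntervalColoring_hubColoring :
    IsBipartiteIntervalColoring (hubRel (Fin q) n) (hubColoring q n U) := by
  refine isBipartiteIntervalColoring_hubRel_iff.2
    ⟨isIntervalLabeling_hubLabel_hubColoring U, isIntervalLabeling_companionLabel_hubColoring U,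
      fun i => ?_, fun j c => ?_⟩ <;> simp only [hubLabel_hubColoring, Sum.elim_inl, Sum.elim_inr]
  · refine .of_injOn_of_mapsTo_Ico (m := i) (injOn_univ.2 fun j k h => ?_) fun j _ => ?_
    · omega
    · rw [ncard_univ, Nat.card_fin, mem_Ico]
      omega
  · simp [companionLabel_hubColoring]

lemma isPivot_hubColoring (i : Fin q) : IsPivot (hubColoring q n U) U i := by
  constructor <;> intro j hj c <;> simp only [hubLabel_hubColoring, Sum.elim_inl, Sum.elim_inr]
  · rw [if_pos hj]
    omega
  · rw [if_neg hj]
    omega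

end HubColoring

end Hub

section Gaps

lemma add_Icc_zero_eq_Icc {M : Set ℕ} {t : ℕ} (hne : M.Nonempty)
    (hM : ∀ x ∈ M, ∀ y ∈ M, x ≤ y + t) : M + Icc 0 t = Icc (sInf M) (sSup M + t) := by
  have hbdd : BddAbove M := ⟨sInf M + t, fun x hx => hM x hx _ (Nat.sInf_mem hne)⟩
  refine (add_subset_iff.2 ?_).antisymm fun x hx => ?_
  · exact fun x hx i hi => ⟨(Nat.sInf_le hx).trans (Nat.le_add_right _ _),
      Nat.add_le_add (le_csSup hbdd hx) hi.2⟩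
  · obtain h | h := le_total x (sInf M + t)
    · exact ⟨sInf M, Nat.sInf_mem hne, x - sInf M, ⟨Nat.zero_le _, by omega⟩,
        Nat.add_sub_of_le hx.1⟩
    · have hsup : sSup M ≤ x := (hM _ (Nat.sSup_mem hne hbdd) _ (Nat.sInf_mem hne)).trans h
      exact ⟨sSup M, Nat.sSup_mem hne hbdd, x - sSup M,
        ⟨Nat.zero_le _, Nat.sub_le_iff_le_add'.2 hx.2⟩, Nat.add_sub_of_le hsup⟩

lemma isGap_iUnion_Icc_iff {ι : Type*} [LinearOrder ι] {a b : ι → ℕ} (hab : ∀ i, a i ≤ b i)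
    (hsep : ∀ i j, i < j → b i + 1 < a j) {x y : ℕ} :
    IsGap (⋃ i, Icc (a i) (b i)) x y ↔ ∃ i j, i ⋖ j ∧ x = b i + 1 ∧ y + 1 = a j := by
  simp only [IsGap, mem_iUnion, mem_Icc, not_exists, not_and, not_le]
  constructor
  · rintro ⟨hx, hxy, hgap, ⟨i, hai, hib⟩, j, haj, hjb⟩
    have hbi : b i < x := by
      by_contra! h
      exact (hgap x le_rfl hxy i (by omega)).not_ge h
    have hya : y < a j := by
      by_contra! h
      exact absurd (hgap y hxy le_rfl j h) (by omega)
    have hij : i < j := by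
      by_contra! h
      obtain rfl | h := h.eq_or_lt
      · omega
      · have := hsep j i h
        omega
    refine ⟨i, j, ⟨hij, fun m him hmj => ?_⟩, by omega, by omega⟩
    have him := hsep i m him
    have hmj := hsep m j hmj
    exact absurd (hgap (a m) (by omega) (by have := hab m; omega) m le_rfl) (hab m).not_gt
  · rintro ⟨i, j, hij, rfl, hy⟩
    have hlt := hsep i j hij.lt
    refine ⟨Nat.succ_pos _, by omega, fun z hz hzy m ham => ?_, ⟨i, hab i, le_rfl⟩,
      j, hy.ge, hy ▸ hab j⟩
    obtain hmj | hjm := lt_or_ge m j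
    · obtain rfl | hmi := (hij.le_of_lt hmj).eq_or_lt
      · exact hz
      · have hmi := hsep m i hmi
        have hi := hab i
        omega
    · obtain rfl | hjm := hjm.eq_or_lt
      · omega
      · have hjm := hsep j m hjm
        have hj := hab j
        omega

lemma exists_finset_gaps_iUnion_Icc {k d : ℕ} {a b : Fin (k + 1) → ℕ} (hab : ∀ i, a i ≤ b i)
    (hsep : ∀ i j, i < j → b i + d + 1 < a j) :
    ∃ gaps : Finset (ℕ × ℕ), gaps.card = k ∧
      (∀ p ∈ gaps, IsGap (⋃ i, Icc (a i) (b i)) p.1 p.2 ∧ d ≤ p.2 + 1 - p.1) ∧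
      ∀ x y, IsGap (⋃ i, Icc (a i) (b i)) x y → (x, y) ∈ gaps := by
  have hsep' (i j) (hij : i < j) : b i + 1 < a j := by
    have := hsep i j hij
    omega
  have hb : StrictMono b := fun i j hij => by
    have hlt := hsep i j hij
    have hle := hab j
    omega
  have hinj : Function.Injective fun i : Fin k => (b i.castSucc + 1, a i.succ - 1) := fun i j h =>
    Fin.castSucc_injective k (hb.injective (Nat.succ_injective (congrArg Prod.fst h)))
  refine ⟨Finset.univ.map ⟨_, hinj⟩, by simp, fun p hp => ?_, fun x y hgap => ?_⟩
  · obtain ⟨i, -, rfl⟩ := Finset.mem_map.1 hp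
    have hlt := hsep _ _ i.castSucc_lt_succ
    dsimp only [Function.Embedding.coeFn_mk]
    exact ⟨(isGap_iUnion_Icc_iff hab hsep').2
      ⟨i.castSucc, i.succ, by simp, rfl, Nat.sub_add_cancel (by omega)⟩, by omega⟩
  · obtain ⟨i, j, hij, rfl, hy⟩ := (isGap_iUnion_Icc_iff hab hsep').1 hgap
    obtain ⟨i, rfl⟩ := Fin.exists_castSucc_eq.2 (hij.lt.trans_le j.le_last).ne
    obtain rfl : i.succ = j := Fin.ext (Nat.covBy_iff_add_one_eq.1 hij.coe_fin)
    exact Finset.mem_map.2 ⟨i, Finset.mem_univ i, Prod.ext rfl (by simp [← hy])⟩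

end Gaps

section HubSpectrum

lemma exists_finset_of_mem_intervalSpectrum_hubRel {ι κ : Type*} [Fintype ι] [DecidableEq ι]
    [Nonempty ι] [Fintype κ] {n : ι → ℕ} (hcard : 2 * Fintype.card ι < Fintype.card κ) {T : ℕ}
    (hT : T ∈ intervalSpectrum (bipartiteGraph (hubRel κ n))) :
    ∃ U : Finset ι, U.sup n + Uᶜ.sup n ≤ T + Fintype.card ι ∧
      T ≤ U.sup n + Uᶜ.sup n + Fintype.card ι + 2 * Fintype.card κ := by
  obtain ⟨f, hf, rfl⟩ := mem_intervalSpectrum_bipartiteGraph.1 hT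
  obtain ⟨U, i, hi⟩ := exists_isPivot hcard hf
  obtain ⟨hlower, hupper⟩ := hi.ncard_colorSet_mem_Icc hf
  simp only [Nat.card_eq_fintype_card] at hlower hupper
  exact ⟨U, by omega, by omega⟩

lemma exists_mem_intervalSpectrum_hubRel {N q : ℕ} [NeZero N] [NeZero q] (n : Fin N → ℕ)
    (U : Finset (Fin N)) :
    ∃ T ∈ intervalSpectrum (bipartiteGraph (hubRel (Fin q) n)),
      U.sup n + Uᶜ.sup n ≤ T + N ∧ T ≤ U.sup n + Uᶜ.sup n + N + 2 * q := by
  have hf := isBipartiteIntervalColoring_hubColoring (q := q) (n := n) U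
  obtain ⟨hlower, hupper⟩ := (isPivot_hubColoring U (0 : Fin q)).ncard_colorSet_mem_Icc hf
  simp only [Nat.card_fin] at hlower hupper
  exact ⟨_, mem_intervalSpectrum_bipartiteGraph.2 ⟨_, hf, rfl⟩, by omega, by omega⟩

lemma sup_eq_of_last_mem {m : ℕ} {n : Fin (m + 1) → ℕ} (hn : Monotone n) {U : Finset (Fin (m + 1))}
    (hU : Fin.last _ ∈ U) : U.sup n = n (Fin.last _) :=
  (Finset.sup_le fun j _ => hn j.le_last).antisymm (Finset.le_sup hU)

variable {k : ℕ} {n : Fin (k + 2) → ℕ}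

lemma exists_sup_eq_castSucc (h0 : n 0 = 0) {U : Finset (Fin (k + 2))} (hU : Fin.last _ ∉ U) :
    ∃ j : Fin (k + 1), U.sup n = n j.castSucc := by
  obtain rfl | hne := U.eq_empty_or_nonempty
  · exact ⟨0, by rw [Finset.sup_empty, Fin.castSucc_zero, h0]; rfl⟩
  · obtain ⟨j, hj, hsup⟩ := U.exists_mem_eq_sup hne n
    obtain ⟨i, rfl⟩ := Fin.exists_castSucc_eq.2 (ne_of_mem_of_not_mem hj hU)
    exact ⟨i, hsup⟩

lemma exists_sup_add_sup_compl_eq (hn : Monotone n) (h0 : n 0 = 0) (U : Finset (Fin (k + 2))) :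
    ∃ j : Fin (k + 1), U.sup n + Uᶜ.sup n = n (Fin.last _) + n j.castSucc := by
  by_cases hU : Fin.last _ ∈ U
  · obtain ⟨j, hj⟩ := exists_sup_eq_castSucc (U := Uᶜ) h0 (by simpa using hU)
    exact ⟨j, by rw [sup_eq_of_last_mem hn hU, hj]⟩
  · obtain ⟨j, hj⟩ := exists_sup_eq_castSucc h0 hU
    exact ⟨j, by rw [sup_eq_of_last_mem hn (Finset.mem_compl.2 hU), hj, add_comm]⟩

lemma sup_singleton_add_sup_compl_singleton (hn : Monotone n) (j : Fin (k + 1)) :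
    ({j.castSucc} : Finset _).sup n + ({j.castSucc} : Finset _)ᶜ.sup n =
      n (Fin.last _) + n j.castSucc := by
  rw [Finset.sup_singleton, sup_eq_of_last_mem hn (by simp [j.castSucc_ne_last.symm]), add_comm]

lemma exists_intervalSpectrum_hubRel_add_Icc_eq_iUnion (hn : Monotone n) (h0 : n 0 = 0) {q t : ℕ}
    (hq : 2 * (k + 2) < q) (ht : 2 * (k + 2) + 2 * q ≤ t) :
    ∃ a b : Fin (k + 1) → ℕ,
      (∀ j, n (Fin.last _) + n j.castSucc ≤ a j + (k + 2)) ∧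
      (∀ j, a j ≤ b j) ∧
      (∀ j, b j ≤ n (Fin.last _) + n j.castSucc + (k + 2) + 2 * q + t) ∧
      intervalSpectrum (bipartiteGraph (hubRel (Fin q) n)) + Icc 0 t = ⋃ j, Icc (a j) (b j) := by
  set S := intervalSpectrum (bipartiteGraph (hubRel (Fin q) n))
  let cluster (j : Fin (k + 1)) : Set ℕ := {T ∈ S | n (Fin.last _) + n j.castSucc ≤ T + (k + 2) ∧
    T ≤ n (Fin.last _) + n j.castSucc + (k + 2) + 2 * q}
  have hS : S = ⋃ j, cluster j := by
    refine subset_antisymm (fun T hT => mem_iUnion.2 ?_) (iUnion_subset fun j => sep_subset _ _)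
    obtain ⟨U, hU⟩ := exists_finset_of_mem_intervalSpectrum_hubRel (by simpa using hq) hT
    obtain ⟨j, hj⟩ := exists_sup_add_sup_compl_eq hn h0 U
    exact ⟨j, hT, by simpa [hj] using hU⟩
  have hne (j) : (cluster j).Nonempty := by
    have : NeZero q := ⟨by omega⟩
    obtain ⟨T, hT, hbounds⟩ := exists_mem_intervalSpectrum_hubRel (q := q) n {j.castSucc}
    exact ⟨T, hT, by rwa [sup_singleton_add_sup_compl_singleton hn] at hbounds⟩
  have hdiam (j) : ∀ x ∈ cluster j, ∀ y ∈ cluster j, x ≤ y + t := by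
    rintro x ⟨-, -, hx⟩ y ⟨-, hy, -⟩
    omega
  have hbdd (j) : BddAbove (cluster j) := ⟨_, fun T hT => hT.2.2⟩
  refine ⟨fun j => sInf (cluster j), fun j => sSup (cluster j) + t,
    fun j => (Nat.sInf_mem (hne j)).2.1, fun j => ?_,
    fun j => Nat.add_le_add_right (Nat.sSup_mem (hne j) (hbdd j)).2.2 t, ?_⟩
  · exact (Nat.sInf_le (Nat.sSup_mem (hne j) (hbdd j))).trans (Nat.le_add_right _ _)
  · rw [hS, iUnion_add]
    exact iUnion_congr fun j => add_Icc_zero_eq_Icc (hne j) (hdiam j)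

end HubSpectrum

/-- For all `k, d` there is a finite bipartite interval colorable graph whose interval
spectrum has exactly `k` gaps, each of size at least `d`. -/
theorem stmt14 (k d : ℕ) :
    ∃ (n : ℕ) (G : SimpleGraph (Fin n)), G.Colorable 2 ∧ IntervalColorable G ∧
      ∃ gaps : Finset (ℕ × ℕ), gaps.card = k ∧
        (∀ p ∈ gaps, IsGap (intervalSpectrum G) p.1 p.2 ∧ d ≤ p.2 + 1 - p.1) ∧
        (∀ a b : ℕ, IsGap (intervalSpectrum G) a b → (a, b) ∈ gaps) := by
  let q := 2 * (k + 2) + 1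
  let t := 2 * (k + 2) + 2 * q
  let n : Fin (k + 2) → ℕ := fun j => j * (2 * t + d + 2)
  have hn : Monotone n := fun i j hij => Nat.mul_le_mul_right _ hij
  obtain ⟨a, b, ha, hab, hb, hS⟩ := exists_intervalSpectrum_hubRel_add_Icc_eq_iUnion hn
    (Nat.zero_mul _) (q := q) (Nat.lt_succ_self _) (le_refl t)
  let G := bipartiteGraph (Sum.LiftRel (hubRel (Fin q) n) (Eq (α := Fin t)))
  have hspectrum : intervalSpectrum (G.overFin rfl) = ⋃ j, Icc (a j) (b j) := by
    rw [← intervalSpectrum_congr (G.overFinIso rfl), intervalSpectrum_liftRel_eq, hS]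
    exact ⟨.inl 0, .inl 0, trivial⟩
  have hsep (i j) (hij : i < j) : b i + d + 1 < a j := by
    have hnij : n i.castSucc + (2 * t + d + 2) ≤ n j.castSucc := by
      rw [← Nat.succ_mul]
      exact Nat.mul_le_mul_right _ hij
    have haj := ha j
    have hbi := hb i
    omega
  obtain ⟨c, hc, -⟩ : a 0 ∈ intervalSpectrum (G.overFin rfl) :=
    hspectrum ▸ mem_iUnion.2 ⟨0, le_rfl, hab 0⟩
  refine ⟨_, G.overFin rfl, ?_, ⟨c, hc⟩, ?_⟩
  · exact (bipartiteGraph_colorable_two _).of_hom (G.overFinIso rfl).symm.toHom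
  · rw [hspectrum]
    exact exists_finset_gaps_iUnion_Icc hab hsep
end
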